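/- Let X be a standard Borel space, E a countable Borel equivalence relation on X, and ρ : E → (0,∞) a Borel cocycle. The following are equivalent: (1) there is an injective Borel compression of the quotient of ρ by a finite Borel subequivalence relation of E; (2) there is a Borel subequivalence relation of E on which ρ is aperiodic and smooth; (3) there exist an E-invariant Borel set B ⊆ X and a Borel subequivalence relation F of E such that F restricted to the complement of B is smooth, ρ restricted to F restricted to the complement of B is aperiodic, and there is a strictly (ρ restricted to F|B)-increasing Borel automorphism of B. -/

import Mathlib

open MeasureTheory Set ENNReal

namespace CocycleNadkarni

variable {X : Type*} {Γ : Type*}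

/-- The `ρ`-size of `Y` relative to the point `z`: `∑_{y ∈ Y} ρ(y, z)`. -/
noncomputable def eSize (ρ : X → X → ℝ) (Y : Set X) (z : X) : ℝ≥0∞ :=
  ∑' y : Y, ENNReal.ofReal (ρ y z)

/-- The `ρ`-size of `Y` relative to the set `Z`, computed at the point `z`. -/
noncomputable def relSize (ρ : X → X → ℝ) (Y Z : Set X) (z : X) : ℝ≥0∞ :=
  eSize ρ Y z / eSize ρ Z z

/-- Real-valued `ρ`-size (used for finite sets). -/
noncomputable def rSize (ρ : X → X → ℝ) (Y : Set X) (z : X) : ℝ :=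
  ∑' y : Y, ρ y z

/-- `∫_C f dμ^ρ_S`, computed at the point `z`. -/
noncomputable def avgOn (ρ : X → X → ℝ) (f : X → ℝ) (S C : Set X) (z : X) : ℝ :=
  (∑' y : ↥(S ∩ C), f y * ρ y z) / rSize ρ S z

/-- countable Borel equivalence relation -/
def IsCBER [MeasurableSpace X] (E : X → X → Prop) : Prop :=
  Equivalence E ∧ MeasurableSet {p : X × X | E p.1 p.2} ∧ ∀ x : X, {y | E x y}.Countable

/-- Borel cocycle `ρ : E → (0, ∞)` (as a total function whose values off `E` are irrelevant). -/
def IsCocycle [MeasurableSpace X] (E : X → X → Prop) (ρ : X → X → ℝ) : Prop :=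
  Measurable (fun p : X × X => ρ p.1 p.2) ∧
    (∀ ⦃x y : X⦄, E x y → 0 < ρ x y) ∧
    ∀ ⦃x y z : X⦄, E x y → E y z → ρ x z = ρ x y * ρ y z

/-- Borel cocycle into a group `Γ`. -/
def IsGrpCocycle [MeasurableSpace X] [Group Γ] [MeasurableSpace Γ]
    (E : X → X → Prop) (ρ : X → X → Γ) : Prop :=
  Measurable (fun p : X × X => ρ p.1 p.2) ∧
    ∀ ⦃x y z : X⦄, E x y → E y z → ρ x z = ρ x y * ρ y z

/-- finite Borel subequivalence relation of `E` -/
def IsFinSubequiv [MeasurableSpace X] (E F : X → X → Prop) : Prop :=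
  Equivalence F ∧ MeasurableSet {p : X × X | F p.1 p.2} ∧
    (∀ ⦃x y : X⦄, F x y → E x y) ∧ ∀ x : X, {y | F x y}.Finite

/-- finite Borel subequivalence relation of `E` restricted to `W` (extended by the diagonal). -/
def IsFinSubequivOn [MeasurableSpace X] (E : X → X → Prop) (W : Set X)
    (F : X → X → Prop) : Prop :=
  Equivalence F ∧ MeasurableSet {p : X × X | F p.1 p.2} ∧
    (∀ ⦃x y : X⦄, F x y → x = y ∨ (E x y ∧ x ∈ W ∧ y ∈ W)) ∧ ∀ x : X, {y | F x y}.Finite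

/-- `ρ`-invariance of a Borel measure. -/
def IsInvariant [MeasurableSpace X] (E : X → X → Prop) (ρ : X → X → ℝ)
    (μ : Measure X) : Prop :=
  ∀ T : X ≃ᵐ X, (∀ x, E (T x) x) → ∀ B : Set X, MeasurableSet B →
    μ (T '' B) = ∫⁻ x in B, ENNReal.ofReal (ρ (T x) x) ∂μ

/-- invariance w.r.t. the restriction of `ρ` to a set `R` of pairs, via Borel injections
whose graphs are contained in `R⁻¹`. -/
def IsInvariantRel [MeasurableSpace X] (R : Set (X × X)) (ρ : X → X → ℝ)
    (μ : Measure X) : Prop :=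
  ∀ (B : Set X) (T : X → X), MeasurableSet B → Measurable T → Set.InjOn T B →
    (∀ x ∈ B, ((T x, x) : X × X) ∈ R) →
    μ (T '' B) = ∫⁻ x in B, ENNReal.ofReal (ρ (T x) x) ∂μ

/-- a Borel ℕ-coloring of the lacunarity digraph `G^ρ_Z`. -/
def HasColoring [MeasurableSpace X] (E : X → X → Prop) (ρ : X → X → Γ)
    (Z : Set Γ) : Prop :=
  ∃ c : X → ℕ, Measurable c ∧
    ∀ ⦃x y : X⦄, x ≠ y → E x y → ρ x y ∈ Z → c x ≠ c y

/-- smoothness of the cocycle `ρ` restricted to `E` restricted to `W`. -/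
def SmoothOn [MeasurableSpace X] (E : X → X → Prop) (ρ : X → X → ℝ)
    (W : Set X) : Prop :=
  ∃ U : Set ℝ, IsOpen U ∧ (1:ℝ) ∈ U ∧ U ⊆ Set.Ioi 0 ∧
    ∃ c : X → ℕ, Measurable c ∧
      ∀ ⦃x y : X⦄, x ∈ W → y ∈ W → x ≠ y → E x y → ρ x y ∈ U → c x ≠ c y

/-- smoothness of the cocycle `ρ` on `E`. -/
def Smooth [MeasurableSpace X] (E : X → X → Prop) (ρ : X → X → ℝ) : Prop :=
  SmoothOn E ρ Set.univ

/-- `E`-invariance of a set. -/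
def EInvariant (E : X → X → Prop) (B : Set X) : Prop :=
  ∀ ⦃x y : X⦄, E x y → x ∈ B → y ∈ B

/-- a compression of `ρ` over the finite subequivalence relation `F` of `E`. -/
def CompressionOver [MeasurableSpace X] (E F : X → X → Prop) (ρ : X → X → ℝ)
    (φ : X → X) : Prop :=
  (∀ x, E x (φ x)) ∧
  (∀ x : X, relSize ρ (φ ⁻¹' {y | F y x}) {y | F y x} x ≤ 1) ∧
  (∀ x : X, ∃ y, E x y ∧ relSize ρ (φ ⁻¹' {z | F z y}) {z | F z y} y < 1)

/-- a compression of the quotient of `ρ | E | W` by the finite subequivalence relation given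
by the setoid `s`, expressed via representatives. -/
def QuotCompressionOn [MeasurableSpace X] (E : X → X → Prop) (ρ : X → X → ℝ)
    (W : Set X) (s : Setoid X) (φ : Quotient s → Quotient s) : Prop :=
  (∀ ⦃x : X⦄, x ∈ W → ∀ y : X, φ (Quotient.mk s x) = Quotient.mk s y → (E x y ∧ y ∈ W)) ∧
  (∀ ⦃x : X⦄, x ∈ W →
    relSize ρ {y | y ∈ W ∧ φ (Quotient.mk s y) = Quotient.mk s x} {y | s.r y x} x ≤ 1) ∧
  (∀ ⦃x : X⦄, x ∈ W → ∃ y, y ∈ W ∧ E x y ∧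
    relSize ρ {z | z ∈ W ∧ φ (Quotient.mk s z) = Quotient.mk s y} {z | s.r z y} y < 1)


/-- `B` has `ρ`-density at least `ε` relative to `W`. -/
def HasDensityAtLeastOn [MeasurableSpace X] (E : X → X → Prop) (ρ : X → X → ℝ)
    (B W : Set X) (ε : ℝ) : Prop :=
  ∃ F : X → X → Prop, IsFinSubequivOn E W F ∧
    ∀ x ∈ W, ENNReal.ofReal ε ≤ relSize ρ (B ∩ {y | F y x}) {y | F y x} x

/-- `B` has positive `ρ`-density relative to `W`. -/
def HasPosDensityOn [MeasurableSpace X] (E : X → X → Prop) (ρ : X → X → ℝ)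
    (B W : Set X) : Prop :=
  ∃ ε : ℝ, 0 < ε ∧ HasDensityAtLeastOn E ρ B W ε

/-- `B` has σ-positive `ρ`-density relative to `W`. -/
def HasSigmaPosDensityOn [MeasurableSpace X] (E : X → X → Prop) (ρ : X → X → ℝ)
    (B W : Set X) : Prop :=
  ∃ A : ℕ → Set X, (∀ n, MeasurableSet (A n)) ∧ (∀ n, A n ⊆ W) ∧
    (∀ n, ∀ x ∈ A n, ∀ y ∈ W, E x y → y ∈ A n) ∧ W = ⋃ n, A n ∧
    ∀ n, HasPosDensityOn E ρ (B ∩ A n) (A n)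

/-!
(1 ⇒ 2): an injective compression of `ρ / F` moves representatives of the `F`-classes by an
injection `ψ` that never decreases the mass of a class. As every `E`-class contains a defect of `ψ`
(a point outside of its range or one whose mass strictly increases), every point can be sent to a
`ψ`-orbit with a defect. Such an orbit never returns, so the pullback of the tail equivalence
relation of `ψ` is `ρ`-aperiodic. It is smooth because a defect breaks the symmetry of its orbit:
it marks a point of the orbit, or a jump of the supremum or infimum of the masses seen from the
points of the orbit, unless those masses are unbounded in both directions, in which case every
compact window of masses contains only finitely many points of the orbit.

(2 ⇒ 3): passing to a color class makes the values of `ρ` on each class lacunary, so that the class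
is discretely ordered by mass. The heaviest and the lightest points of the color classes contain a
Borel set meeting every class having such points exactly once. It is a transversal of the smooth
aperiodic part, and elsewhere the successor map by mass is a strictly increasing automorphism.

(3 ⇒ 1): the points of an infinite smooth class are cut into consecutive blocks of strictly
increasing size, and each block is sent to the next. On `B` the automorphism already compresses `ρ`.

Borel choices inside the classes rest on the Lusin-Novikov theorem: if the domain of a Borel map is
not covered by countably many Borel sets on which the map is injective, then repeatedly splitting
sets that meet a common fibre robustly produces a perfect subset of a fibre.
-/

section LusinNovikov

variable {Z : Type*}

/-- A set `W` is countably colorable for a relation `G` if countably many Borel sets without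
`G`-related distinct points cover it. These sets form a σ-ideal. Applied to lacunarity relations it
expresses smoothness of a cocycle, applied to the kernel of a map it expresses that the map is
injective on each of countably many Borel pieces. -/
def CountablyColorable [MeasurableSpace Z] (G : Z → Z → Prop) (W : Set Z) : Prop :=
  ∃ D : ℕ → Set Z, (∀ n, MeasurableSet (D n) ∧ (D n).Pairwise fun x y => ¬G x y) ∧ W ⊆ ⋃ n, D n

namespace CountablyColorable

variable [MeasurableSpace Z] {G : Z → Z → Prop}

lemma mono {W W' : Set Z} (hW : CountablyColorable G W) (hWW' : W' ⊆ W) :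
    CountablyColorable G W' := by
  obtain ⟨D, hD, hWD⟩ := hW
  exact ⟨D, hD, hWW'.trans hWD⟩

lemma of_pairwise {D : Set Z} (hDm : MeasurableSet D) (hD : D.Pairwise fun x y => ¬G x y) :
    CountablyColorable G D :=
  ⟨fun _ => D, fun _ => ⟨hDm, hD⟩, (iUnion_const D).superset⟩

lemma iUnion {ι : Type*} [Countable ι] {W : ι → Set Z} (hW : ∀ i, CountablyColorable G (W i)) :
    CountablyColorable G (⋃ i, W i) := by
  choose D hD hWD using hW
  cases isEmpty_or_nonempty ι
  · rw [iUnion_of_empty]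
    exact of_pairwise MeasurableSet.empty (pairwise_empty _)
  obtain ⟨e, he⟩ := exists_surjective_nat (ι × ℕ)
  refine ⟨fun n => D (e n).1 (e n).2, fun n => hD _ _, iUnion_subset fun i z hz => ?_⟩
  obtain ⟨k, hk⟩ := mem_iUnion.1 (hWD i hz)
  obtain ⟨n, hn⟩ := he (i, k)
  exact mem_iUnion.2 ⟨n, by rwa [hn]⟩

lemma union {V W : Set Z} (hV : CountablyColorable G V) (hW : CountablyColorable G W) :
    CountablyColorable G (V ∪ W) := by
  rw [union_eq_iUnion]
  exact iUnion (Bool.forall_bool.2 ⟨hW, hV⟩)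

lemma exists_measurable_coloring (hG : CountablyColorable G univ) :
    ∃ c : Z → ℕ, Measurable c ∧ ∀ x y, x ≠ y → G x y → c x ≠ c y := by
  obtain ⟨D, hD, hDu⟩ := hG
  have hex : ∀ x, ∃ n, x ∈ D n := fun x => mem_iUnion.1 (hDu (mem_univ x))
  classical
  refine ⟨fun x => Nat.find (hex x), measurable_find hex fun n => (hD n).1,
    fun x y hxy hG hc => ?_⟩
  have hx := Nat.find_spec (hex x)
  simp only [hc] at hx
  exact (hD _).2 hx (Nat.find_spec (hex y)) hxy hG

end CountablyColorable

open TopologicalSpace in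
lemma exists_mem_countableBasis_closure_subset [TopologicalSpace Z] [SecondCountableTopology Z]
    [RegularSpace Z] {z : Z} {O : Set Z} (hO : IsOpen O) (hz : z ∈ O) :
    ∃ v : countableBasis Z, z ∈ (v : Set Z) ∧ closure (v : Set Z) ⊆ O := by
  obtain ⟨v, hv, hzv, hvO⟩ := (isBasis_countableBasis Z).exists_closure_subset (hO.mem_nhds hz)
  exact ⟨⟨v, hv⟩, hzv, hvO⟩

open TopologicalSpace in
lemma exists_countableBasis_disjoint_closure [MetricSpace Z] [SecondCountableTopology Z]
    {O : Set Z} (hO : IsOpen O) {z z' : Z} (hz : z ∈ O) (hz' : z' ∈ O) (hne : z ≠ z')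
    {ε : ℝ} (hε : 0 < ε) :
    ∃ v v' : countableBasis Z, z ∈ (v : Set Z) ∧ z' ∈ (v' : Set Z) ∧ (v : Set Z) ⊆ O ∧
      (v' : Set Z) ⊆ O ∧ Disjoint (closure (v : Set Z)) (closure v') ∧
      ∀ a ∈ closure (v : Set Z), ∀ b ∈ closure (v : Set Z), dist a b ≤ ε := by
  have hδ : 0 < min (ε / 2) (dist z z' / 2) := lt_min (half_pos hε) (half_pos (dist_pos.2 hne))
  obtain ⟨v, hzv, hv⟩ := exists_mem_countableBasis_closure_subset
    (hO.inter Metric.isOpen_ball) ⟨hz, Metric.mem_ball_self hδ⟩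
  obtain ⟨v', hzv', hv'⟩ := exists_mem_countableBasis_closure_subset
    (hO.inter Metric.isOpen_ball) ⟨hz', Metric.mem_ball_self hδ⟩
  refine ⟨v, v', hzv, hzv', subset_closure.trans (hv.trans inter_subset_left),
    subset_closure.trans (hv'.trans inter_subset_left), ?_, fun a ha b hb => ?_⟩
  · refine (Metric.ball_disjoint_ball ?_).mono (hv.trans inter_subset_right)
      (hv'.trans inter_subset_right)
    linarith [min_le_right (ε / 2) (dist z z' / 2)]
  · linarith [dist_triangle_right a b z, Metric.mem_ball.1 (hv ha).2,
      Metric.mem_ball.1 (hv hb).2, min_le_left (ε / 2) (dist z z' / 2)]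

/-- The combinatorics of the fusion argument: `U n` is a sequence of sets of which only the first
`n + 1` matter, and in step `n` the set with index `n.unpair.1 ≤ n` is replaced by two small pieces
of it with disjoint closures, the second of which receives the index `n + 1`. Since `Nat.unpair`
takes each value infinitely often as its first component, each set is split infinitely often. -/
structure IsSplittingScheme [MetricSpace Z] (U : ℕ → ℕ → Set Z) : Prop where
  antitone : ∀ i, Antitone fun n => U n i
  subset : ∀ n, U (n + 1) (n + 1) ⊆ U n n.unpair.1
  disjoint : ∀ n, Disjoint (closure (U (n + 1) n.unpair.1)) (closure (U (n + 1) (n + 1)))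
  dist_le : ∀ n, ∀ a ∈ closure (U (n + 1) n.unpair.1), ∀ b ∈ closure (U (n + 1) n.unpair.1),
    dist a b ≤ (1 / 2 : ℝ) ^ n

namespace IsSplittingScheme

variable [MetricSpace Z] {U : ℕ → ℕ → Set Z} {i m n : ℕ} {ζ : ℕ → Z}

lemma dist_le_of_pair_lt (hU : IsSplittingScheme U) (hn : Nat.pair i m < n) {a b : Z}
    (ha : a ∈ closure (U n i)) (hb : b ∈ closure (U n i)) : dist a b ≤ (1 / 2 : ℝ) ^ m := by
  have hsub := closure_mono (hU.antitone i hn)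
  have hdist := hU.dist_le (Nat.pair i m)
  rw [Nat.unpair_pair] at hdist
  exact (hdist a (hsub ha) b (hsub hb)).trans
    (pow_le_pow_of_le_one (by norm_num) (by norm_num) (Nat.right_le_pair i m))

lemma cauchySeq (hU : IsSplittingScheme U) {z : ℕ → Z} (hz : ∀ n, z n ∈ U n i) : CauchySeq z := by
  rw [Metric.cauchySeq_iff']
  intro ε hε
  obtain ⟨m, hm⟩ := exists_pow_lt_of_lt_one hε (show (1 / 2 : ℝ) < 1 by norm_num)
  exact ⟨Nat.pair i m + 1, fun n hn => (hU.dist_le_of_pair_lt (Nat.lt_succ_self _)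
    (subset_closure (hU.antitone i hn (hz n))) (subset_closure (hz _))).trans_lt hm⟩

lemma preperfect_range (hU : IsSplittingScheme U) (hζ : ∀ i n, ζ i ∈ closure (U n i)) :
    Preperfect (range ζ) := by
  rw [preperfect_iff_nhds]
  rintro _ ⟨i, rfl⟩ O hO
  obtain ⟨ε, hε, hball⟩ := Metric.mem_nhds_iff.1 hO
  obtain ⟨m, hm⟩ := exists_pow_lt_of_lt_one hε (show (1 / 2 : ℝ) < 1 by norm_num)
  let n := Nat.pair i (m + 1)
  have hi : n.unpair.1 = i := by rw [Nat.unpair_pair]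
  have hsub := hU.subset n
  have hdisj := hU.disjoint n
  rw [hi] at hsub hdisj
  refine ⟨ζ (n + 1), ⟨hball ?_, mem_range_self _⟩, fun h => ?_⟩
  · exact (hU.dist_le_of_pair_lt (Nat.pair_lt_pair_right i (Nat.lt_succ_self m))
      (closure_mono hsub (hζ _ _)) (hζ i n)).trans_lt hm
  · exact hdisj.le_bot ⟨hζ i (n + 1), h ▸ hζ (n + 1) (n + 1)⟩

end IsSplittingScheme

lemma not_countable_of_preperfect_subset [MetricSpace Z] [CompleteSpace Z] {C D : Set Z}
    (hC : Preperfect C) (hCn : C.Nonempty) (hD : IsClosed D) (hCD : C ⊆ D) : ¬D.Countable := by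
  intro hDc
  obtain ⟨f, hf, -, hfi⟩ := hC.perfect_closure.exists_nat_bool_injection hCn.closure
  have := (hDc.mono (hf.trans (closure_minimal hCD hD))).to_subtype
  have : Countable (ℕ → Bool) := (rangeFactorization_injective.2 hfi).countable
  have hle := Cardinal.mk_le_aleph0 (α := ℕ → Bool)
  rw [← Cardinal.power_def, Cardinal.mk_bool, Cardinal.mk_nat, Cardinal.two_power_aleph0] at hle
  exact Cardinal.aleph0_lt_continuum.not_ge hle

variable [TopologicalSpace X] [PolishSpace X] [MeasurableSpace X] [BorelSpace X]
  [MeasurableSpace Z] {g : Z → X}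

open TopologicalSpace in
lemma exists_measurableSet_injOn_of_analyticSet [TopologicalSpace Z] [PolishSpace Z] [BorelSpace Z]
    (hg : Continuous g) {H : Set Z} (hH : AnalyticSet H) (hgH : InjOn g H) :
    ∃ D, MeasurableSet D ∧ InjOn g D ∧ H ⊆ D := by
  have hb := isBasis_countableBasis Z
  have := (countable_countableBasis Z).to_subtype
  have hopen : ∀ u : countableBasis Z, IsOpen (u : Set Z) := fun u => hb.isOpen u.2
  have hsep : ∀ u : countableBasis Z,
      MeasurablySeparable (g '' (H ∩ u)) (g '' (H ∩ (u : Set Z)ᶜ)) := by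
    intro u
    have hHs : ∀ s : Set Z, MeasurableSet s → AnalyticSet (H ∩ s) := fun s hs => by
      rw [inter_eq_iInter]
      exact AnalyticSet.iInter (Bool.forall_bool.2 ⟨hs.analyticSet, hH⟩)
    refine ((hHs _ (hopen u).measurableSet).image_of_continuous hg).measurablySeparable
      ((hHs _ (hopen u).measurableSet.compl).image_of_continuous hg) ?_
    rw [disjoint_iff_inter_eq_empty, ← hgH.image_inter inter_subset_left inter_subset_left,
      ← inter_inter_distrib_left, inter_compl_self, inter_empty, image_empty]
  choose B hHB hBH hBm using hsep
  refine ⟨{z | ∀ u : countableBasis Z, z ∈ (u : Set Z) ↔ g z ∈ B u}, ?_, ?_, ?_⟩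
  · rw [ofPred_forall]
    exact MeasurableSet.iInter fun u => (hopen u).measurableSet.iff (hg.measurable (hBm u))
  · intro z hz z' hz' hzz'
    refine (hb.inseparable_iff.2 fun u hu => ?_).eq
    rw [hz ⟨u, hu⟩, hz' ⟨u, hu⟩, hzz']
  · refine fun z hz u => ⟨fun hzu => hHB u ⟨z, ⟨hz, hzu⟩, rfl⟩, fun hzB => ?_⟩
    by_contra hzu
    exact disjoint_left.1 (hBH u) ⟨z, ⟨hz, hzu⟩, rfl⟩ hzB

/-- A family of sets is large for `g` if, after removal of countably many Borel sets on which `g`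
is injective, some fibre of `g` still meets all its members. This is the invariant of the fusion
argument which builds a perfect subset of a fibre. -/
def Large (g : Z → X) (U : ℕ → Set Z) : Prop :=
  ∀ W, CountablyColorable (fun z z' => g z = g z') W → ∃ x, ∀ i, x ∈ g '' (U i \ W)

variable {U : ℕ → Set Z} {i k : ℕ}

lemma Large.exists_ne [TopologicalSpace Z] [PolishSpace Z] [BorelSpace Z] (hg : Continuous g)
    (hL : Large g U) (hU : ∀ j, IsOpen (U j)) {W : Set Z} (hWm : MeasurableSet W)
    (hW : CountablyColorable (fun z z' => g z = g z') W) (i : ℕ) :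
    ∃ z z', z ≠ z' ∧ g z = g z' ∧ z ∈ U i \ W ∧ z' ∈ U i \ W ∧ ∀ j, g z ∈ g '' (U j \ W) := by
  let H : Set Z := (U i \ W) ∩ ⋂ j, g ⁻¹' (g '' (U j \ W))
  have hUW : ∀ j, AnalyticSet (U j \ W) := fun j =>
    ((hU j).measurableSet.diff hWm).analyticSet
  have hH : AnalyticSet H := by
    rw [show H = _ from inter_eq_iInter]
    refine AnalyticSet.iInter (Bool.forall_bool.2 ⟨?_, hUW i⟩)
    exact AnalyticSet.iInter fun j => ((hUW j).image_of_continuous hg).preimage hg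
  by_contra hcon
  have hgH : InjOn g H := fun z hz z' hz' hzz' => by
    by_contra hne
    exact hcon ⟨z, z', hne, hzz', hz.1, hz'.1, fun j => mem_iInter.1 hz.2 j⟩
  obtain ⟨D, hDm, hgD, hHD⟩ := exists_measurableSet_injOn_of_analyticSet hg hH hgH
  obtain ⟨x, hx⟩ := hL (W ∪ D) (hW.union
    (.of_pairwise hDm (injOn_iff_pairwise_ne.1 hgD)))
  have hxW : ∀ j, x ∈ g '' (U j \ W) := fun j =>
    image_mono (sdiff_subset_sdiff_right subset_union_left) (hx j)
  obtain ⟨z, ⟨hzU, hzWD⟩, rfl⟩ := hx i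
  exact hzWD (.inr (hHD ⟨⟨hzU, fun h => hzWD (.inl h)⟩, mem_iInter.2 hxW⟩))

open TopologicalSpace Function in
lemma Large.exists_split [MetricSpace Z] [CompleteSpace Z] [SecondCountableTopology Z]
    [BorelSpace Z] (hg : Continuous g) (hL : Large g U) (hU : ∀ j, IsOpen (U j))
    {ε : ℝ} (hε : 0 < ε) :
    ∃ V V', IsOpen V ∧ IsOpen V' ∧ V ⊆ U i ∧ V' ⊆ U i ∧ Disjoint (closure V) (closure V') ∧
      (∀ a ∈ closure V, ∀ b ∈ closure V, dist a b ≤ ε) ∧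
      Large g (update (update U i V) k V') := by
  by_contra! hcon
  let Good (v v' : Set Z) : Prop := v ⊆ U i ∧ v' ⊆ U i ∧ Disjoint (closure v) (closure v') ∧
    ∀ a ∈ closure v, ∀ b ∈ closure v, dist a b ≤ ε
  have hopen : ∀ u : countableBasis Z, IsOpen (u : Set Z) := fun u =>
    (isBasis_countableBasis Z).isOpen u.2
  have := (countable_countableBasis Z).to_subtype
  have hbad : ∀ v : {v : countableBasis Z × countableBasis Z // Good v.1 v.2},
      ¬Large g (update (update U i v.1.1) k v.1.2) := fun ⟨v, h⟩ =>
    hcon _ _ (hopen v.1) (hopen v.2) h.1 h.2.1 h.2.2.1 h.2.2.2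
  simp only [Large, not_forall] at hbad
  choose W hW hbad using hbad
  obtain ⟨D, hD, hWD⟩ := CountablyColorable.iUnion hW
  obtain ⟨z, z', hne, hgz, hz, hz', hzU⟩ := hL.exists_ne hg hU
    (MeasurableSet.iUnion fun n => (hD n).1) ⟨D, hD, subset_rfl⟩ i
  obtain ⟨v, v', hzv, hzv', hgood⟩ :=
    exists_countableBasis_disjoint_closure (hU i) hz.1 hz'.1 hne hε
  refine hbad ⟨(v, v'), hgood⟩ ⟨g z, fun j => ?_⟩
  have hWv : W ⟨(v, v'), hgood⟩ ⊆ ⋃ n, D n := (subset_iUnion W _).trans hWD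
  rcases eq_or_ne j k with rfl | hjk
  · exact ⟨z', ⟨by simpa using hzv', fun h => hz'.2 (hWv h)⟩, hgz.symm⟩
  rcases eq_or_ne j i with rfl | hji
  · exact ⟨z, ⟨by simpa [hjk] using hzv, fun h => hz.2 (hWv h)⟩, rfl⟩
  · rw [update_of_ne hjk, update_of_ne hji]
    exact image_mono (sdiff_subset_sdiff_right hWv) (hzU j)

open Function in
lemma Large.exists_isSplittingScheme [MetricSpace Z] [CompleteSpace Z] [SecondCountableTopology Z]
    [BorelSpace Z] (hg : Continuous g) (hL : Large g fun _ => univ) :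
    ∃ U : ℕ → ℕ → Set Z, IsSplittingScheme U ∧ ∀ n, Large g (U n) := by
  let P (n : ℕ) (U : ℕ → Set Z) : Prop :=
    Large g U ∧ (∀ j, IsOpen (U j)) ∧ ∀ j > n, U j = univ
  have hstep : ∀ n U, P n U → ∃ V V', V ⊆ U n.unpair.1 ∧ V' ⊆ U n.unpair.1 ∧
      Disjoint (closure V) (closure V') ∧
      (∀ a ∈ closure V, ∀ b ∈ closure V, dist a b ≤ (1 / 2 : ℝ) ^ n) ∧
      P (n + 1) (update (update U n.unpair.1 V) (n + 1) V') := by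
    intro n U ⟨hL, hU, huniv⟩
    obtain ⟨V, V', hV, hV', hVU, hVU', hdisj, hdist, hL'⟩ :=
      hL.exists_split (i := n.unpair.1) (k := n + 1) hg hU (pow_pos one_half_pos n)
    refine ⟨V, V', hVU, hVU', hdisj, hdist, hL', ?_, fun j hj => ?_⟩
    · exact forall_update_iff _ _ |>.2 ⟨hV', fun j _ =>
        forall_update_iff _ (fun _ s => IsOpen s) |>.2 ⟨hV, fun j _ => hU j⟩ j⟩
    · have := Nat.unpair_left_le n
      rw [update_of_ne (by lia), update_of_ne (by lia), huniv j (by lia)]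
  choose V V' hVU hVU' hdisj hdist hP using hstep
  let S : (n : ℕ) → {U // P n U} := fun n => Nat.rec ⟨fun _ => univ, hL, by simp, by simp⟩
    (fun n U => ⟨_, hP n U.1 U.2⟩) n
  have hi : ∀ n, (S (n + 1)).1 n.unpair.1 = V n _ (S n).2 := fun n => by
    have := Nat.unpair_left_le n
    exact (update_of_ne (by lia) _ _).trans (update_self _ _ _)
  have hk : ∀ n, (S (n + 1)).1 (n + 1) = V' n _ (S n).2 := fun n => update_self _ _ _
  refine ⟨fun n => (S n).1, ⟨fun j => antitone_nat_of_succ_le fun n => ?_, fun n => ?_, fun n => ?_,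
    fun n => ?_⟩, fun n => (S n).2.1⟩
  · rcases eq_or_ne j (n + 1) with rfl | hj
    · simp [(S n).2.2.2 (n + 1) (Nat.lt_succ_self n)]
    rcases eq_or_ne j n.unpair.1 with rfl | hj'
    · exact (hi n).trans_subset (hVU n _ _)
    · exact ((update_of_ne hj _ _).trans (update_of_ne hj' _ _)).subset
  · exact (hk n).trans_subset (hVU' n _ _)
  · rw [hi, hk]
    exact hdisj n _ _
  · rw [hi]
    exact hdist n _ _

lemma countablyColorable_univ_of_countable_fibers_of_continuous [MetricSpace Z] [CompleteSpace Z]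
    [SecondCountableTopology Z] [BorelSpace Z] (hg : Continuous g)
    (hc : ∀ x, (g ⁻¹' {x}).Countable) :
    CountablyColorable (fun z z' => g z = g z') univ := by
  by_contra hns
  have hL : Large g fun _ => univ := by
    intro W hW
    obtain ⟨z, hz⟩ : ∃ z, z ∉ W := by
      by_contra! hcon
      exact hns (hW.mono fun z _ => hcon z)
    exact ⟨g z, fun _ => ⟨z, ⟨mem_univ z, hz⟩, rfl⟩⟩
  obtain ⟨U, hU, hLU⟩ := hL.exists_isSplittingScheme hg
  choose x hx using fun n => hLU n ∅ (.of_pairwise MeasurableSet.empty (pairwise_empty _))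
  choose z hz hzx using fun i n => hx n i
  choose ζ hζ using fun i =>
    cauchySeq_tendsto_of_complete (hU.cauchySeq fun n => (hz i n).1)
  have hζU : ∀ i n, ζ i ∈ closure (U n i) := fun i n =>
    mem_closure_of_tendsto (hζ i) (Filter.eventually_atTop.2
      ⟨n, fun m hm => hU.antitone i hm (hz i m).1⟩)
  have hlim : ∀ i, Filter.Tendsto x Filter.atTop (nhds (g (ζ i))) := fun i => by
    simpa only [Function.comp_def, hzx] using (hg.tendsto (ζ i)).comp (hζ i)
  refine not_countable_of_preperfect_subset (hU.preperfect_range hζU) (range_nonempty ζ)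
    (isClosed_singleton.preimage hg) (range_subset_iff.2 fun i => ?_) (hc (g (ζ 0)))
  exact tendsto_nhds_unique (hlim i) (hlim 0)

end LusinNovikov

section Enumeration

variable [MeasurableSpace X] [StandardBorelSpace X]

lemma countablyColorable_univ_of_countable_fibers {Z : Type*} [MeasurableSpace Z]
    [StandardBorelSpace Z] {g : Z → X} (hg : Measurable g) (hc : ∀ x, (g ⁻¹' {x}).Countable) :
    CountablyColorable (fun z z' => g z = g z') univ := by
  let := upgradeStandardBorel X
  let uZ := upgradeStandardBorel Z
  have hpZ : @PolishSpace Z uZ.toTopologicalSpace := inferInstance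
  obtain ⟨t, htZ, hcont, htp⟩ := hg.exists_continuous
  have htb : @BorelSpace Z t _ := by
    refine @BorelSpace.mk Z t _ ?_
    rw [borel_eq_borel_of_le htp hpZ htZ]
    exact uZ.toBorelSpace.measurable_eq
  let := t
  let := TopologicalSpace.upgradeIsCompletelyMetrizable Z
  exact countablyColorable_univ_of_countable_fibers_of_continuous hcont hc

lemma exists_measurable_comp_eq_of_injOn {Y Z : Type*} [MeasurableSpace Y] [MeasurableSpace Z]
    [StandardBorelSpace Z] {g : Z → X} {f : Z → Y} {D : Set Z} (hg : Measurable g)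
    (hD : MeasurableSet D) (hgD : InjOn g D) (hf : Measurable f) (hY : X → Nonempty Y) :
    ∃ h : X → Y, Measurable h ∧ ∀ z ∈ D, h (g z) = f z := by
  have := hD.standardBorel
  obtain ⟨h, hh, hcomp⟩ := ((hg.comp measurable_subtype_coe).measurableEmbedding
    (injOn_iff_injective.1 hgD)).exists_measurable_extend (hf.comp measurable_subtype_coe) hY
  exact ⟨h, hh, fun z hz => congr_fun hcomp ⟨z, hz⟩⟩

lemma IsCBER.exists_enumeration {E : X → X → Prop} (hE : IsCBER E) :
    ∃ f : ℕ → X → X, (∀ n, Measurable (f n)) ∧ f 0 = id ∧ (∀ n x, E x (f n x)) ∧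
      ∀ x y, E x y → ∃ n, f n x = y := by
  classical
  obtain ⟨hEe, hEm, hEc⟩ := hE
  let Z := {p : X × X // E p.1 p.2}
  have : StandardBorelSpace Z := hEm.standardBorel
  let g : Z → X := fun p => p.1.1
  have hg : Measurable g := measurable_fst.comp measurable_subtype_coe
  have hgc : ∀ x, (g ⁻¹' {x}).Countable := fun x => by
    refine MapsTo.countable_of_injOn (f := fun p : Z => p.1.2) (t := {y | E x y}) ?_ ?_ (hEc x)
    · rintro p rfl
      exact p.2
    · exact fun p hp q hq hpq => Subtype.ext (Prod.ext (hp.trans hq.symm) hpq)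
  obtain ⟨D, hD, hDu⟩ := countablyColorable_univ_of_countable_fibers hg hgc
  choose h hhm hhD using fun n => exists_measurable_comp_eq_of_injOn hg (hD n).1
    (injOn_iff_pairwise_ne.2 (hD n).2) (measurable_snd.comp measurable_subtype_coe) fun x => ⟨x⟩
  have hset : ∀ n, MeasurableSet {x | E x (h n x)} := fun n => hEm.preimage
    (measurable_id.prodMk (hhm n))
  refine ⟨fun n => Nat.casesOn n id fun n x => if E x (h n x) then h n x else x, ?_, rfl, ?_, ?_⟩
  · rintro (_ | n)
    exacts [measurable_id, Measurable.ite (hset n) (hhm n) measurable_id]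
  · rintro (_ | n) x
    · exact hEe.refl x
    · change E x (ite _ _ _)
      split_ifs with hx
      exacts [hx, hEe.refl x]
  · intro x y hxy
    obtain ⟨n, hn⟩ := mem_iUnion.1 (hDu (mem_univ ⟨(x, y), hxy⟩))
    have hhn : h n x = y := hhD n _ hn
    exact ⟨n + 1, by simp only [hhn, hxy, if_true]⟩

end Enumeration

section Toolkit

variable {E F : X → X → Prop} {ρ : X → X → ℝ}

lemma measurable_sInf_nat [MeasurableSpace X] {p : ℕ → X → Prop} (hp : ∀ n, Measurable (p n)) :
    Measurable fun x => sInf {n | p n x} := by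
  classical
  have hex : ∀ x, ∃ n, p n x ∨ ∀ m, ¬p m x := fun x => by
    by_cases h : ∃ m, p m x
    exacts [h.imp fun _ => .inl, ⟨0, .inr (not_exists.1 h)⟩]
  convert! measurable_find hex fun n => measurableSet_setOfPred.2 (by fun_prop) with x
  by_cases h : ∃ m, p m x
  · rw [Nat.sInf_def (s := {n | p n x}) h]
    refine Nat.find_congr' fun {n} => ⟨.inl, fun hn => hn.resolve_right fun h' => ?_⟩
    exact h.elim h'
  · rw [(Nat.find_eq_zero (hex x)).2 (.inr (not_exists.1 h))]
    exact Nat.sInf_eq_zero.2 (.inr (eq_empty_of_forall_notMem (not_exists.1 h)))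

namespace IsCBER

lemma measurable [MeasurableSpace X] (hE : IsCBER E) : Measurable fun p : X × X => E p.1 p.2 :=
  measurableSet_setOfPred.1 hE.2.1

lemma of_subrelation [MeasurableSpace X] (hE : IsCBER E) (hF : Equivalence F)
    (hFm : MeasurableSet {p : X × X | F p.1 p.2}) (hFE : ∀ ⦃x y⦄, F x y → E x y) : IsCBER F :=
  ⟨hF, hFm, fun x => (hE.2.2 x).mono fun _ hy => hFE hy⟩

lemma comap [MeasurableSpace X] (hF : IsCBER F) (hE : IsCBER E) (hFE : ∀ ⦃x y⦄, F x y → E x y)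
    {r : X → X} (hr : Measurable r) (hrE : ∀ x, E x (r x)) :
    IsCBER (fun x y => F (r x) (r y)) ∧ ∀ ⦃x y⦄, F (r x) (r y) → E x y := by
  have hsub : ∀ ⦃x y⦄, F (r x) (r y) → E x y := fun x y hxy =>
    hE.1.trans (hrE x) (hE.1.trans (hFE hxy) (hE.1.symm (hrE y)))
  have hFm := hF.measurable
  exact ⟨hE.of_subrelation ⟨fun x => hF.1.refl _, fun h => hF.1.symm h, fun h => hF.1.trans h⟩
    (measurableSet_setOfPred.2 (by fun_prop)) hsub, hsub⟩

variable [MeasurableSpace X] [StandardBorelSpace X] {Y : Type*} [MeasurableSpace Y]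

lemma measurable_exists (hE : IsCBER E) {a : Y → X} (ha : Measurable a) {Q : Y → X → Prop}
    (hQ : Measurable fun p : Y × X => Q p.1 p.2) : Measurable fun y => ∃ z, E (a y) z ∧ Q y z := by
  obtain ⟨f, hf, -, hfE, hfs⟩ := hE.exists_enumeration
  have : ∀ y, (∃ z, E (a y) z ∧ Q y z) ↔ ∃ n, Q y (f n (a y)) := fun y =>
    ⟨fun ⟨z, hz, hQz⟩ => let ⟨n, hn⟩ := hfs _ _ hz; ⟨n, hn.symm ▸ hQz⟩,
      fun ⟨n, hn⟩ => ⟨_, hfE n _, hn⟩⟩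
  simp only [this]
  fun_prop

lemma measurable_forall (hE : IsCBER E) {a : Y → X} (ha : Measurable a) {Q : Y → X → Prop}
    (hQ : Measurable fun p : Y × X => Q p.1 p.2) : Measurable fun y => ∀ z, E (a y) z → Q y z := by
  simpa only [not_exists, not_and, not_not] using
    (hE.measurable_exists (Q := fun y z => ¬Q y z) ha hQ.not).not

lemma exists_measurable_selector (hE : IsCBER E) {R : X → X → Prop}
    (hR : Measurable fun p : X × X => R p.1 p.2) :
    ∃ r : X → X, Measurable r ∧ (∀ x, E x (r x)) ∧ (∀ x y, E x y → R x y → R x (r x)) ∧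
      ∀ x, (R x x ∨ ∀ y, E x y → ¬R x y) → r x = x := by
  classical
  obtain ⟨f, hf, hf0, hfE, hfs⟩ := hE.exists_enumeration
  have hex : ∀ x, ∃ n, R x (f n x) ∨ ∀ m, ¬R x (f m x) := fun x => by
    by_cases h : ∃ m, R x (f m x)
    exacts [h.imp fun _ => .inl, ⟨0, .inr (not_exists.1 h)⟩]
  refine ⟨fun x => f (Nat.find (hex x)) x,
    Measurable.find hf (fun n => measurableSet_setOfPred.2 (by fun_prop)) hex,
    fun x => hfE _ x, fun x y hxy hRxy => ?_, fun x hx => ?_⟩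
  · obtain ⟨n, rfl⟩ := hfs x y hxy
    exact (Nat.find_spec (hex x)).resolve_right fun h => h n hRxy
  · have h0 : Nat.find (hex x) = 0 :=
      (Nat.find_eq_zero (hex x)).2 (hx.imp (by simp [hf0]) fun h m => h _ (hfE m x))
    simp only [h0, hf0, id]

open Classical in
lemma measurable_eSize (hE : IsCBER E) (hρ : Measurable fun p : X × X => ρ p.1 p.2) {a b : Y → X}
    (ha : Measurable a) (hb : Measurable b) {Q : Y → X → Prop}
    (hQ : Measurable fun p : Y × X => Q p.1 p.2) :
    Measurable fun y => eSize ρ {z | E (a y) z ∧ Q y z} (b y) := by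
  obtain ⟨f, hf, -, hfE, hfs⟩ := hE.exists_enumeration
  let First (y : Y) (n : ℕ) : Prop := Q y (f n (a y)) ∧ ∀ m < n, f m (a y) ≠ f n (a y)
  have hbij : ∀ y, Function.Bijective (fun n : {n | First y n} =>
      (⟨f n (a y), hfE _ _, n.2.1⟩ : {z | E (a y) z ∧ Q y z})) := by
    refine fun y => ⟨fun n m hnm => ?_, fun ⟨z, hz, hQz⟩ => ?_⟩
    · have hnm : f n (a y) = f m (a y) := congr_arg Subtype.val hnm
      rcases lt_trichotomy n.1 m.1 with h | h | h
      exacts [(m.2.2 _ h hnm).elim, Subtype.ext h, (n.2.2 _ h hnm.symm).elim]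
    · have hn := Nat.find_spec (hfs _ _ hz)
      exact ⟨⟨Nat.find (hfs _ _ hz), hn.symm ▸ hQz, fun m hm => hn.symm ▸ Nat.find_min _ hm⟩,
        Subtype.ext hn⟩
  have hsum : ∀ y, eSize ρ {z | E (a y) z ∧ Q y z} (b y) =
      ∑' n, if First y n then ENNReal.ofReal (ρ (f n (a y)) (b y)) else 0 := fun y => by
    rw [eSize, ← (Equiv.ofBijective _ (hbij y)).tsum_eq]
    exact (tsum_subtype {n | First y n} fun n => ENNReal.ofReal (ρ (f n (a y)) (b y))).trans
      (tsum_congr fun n => indicator_apply _ _ _)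
  simp only [hsum]
  refine Measurable.tsum fun n => Measurable.ite ?_ (by fun_prop) measurable_const
  exact measurableSet_setOfPred.2 (by fun_prop)

end IsCBER

namespace IsCocycle

variable [MeasurableSpace X] {x y : X}

lemma mono (hρ : IsCocycle E ρ) (hFE : ∀ ⦃x y⦄, F x y → E x y) : IsCocycle F ρ :=
  ⟨hρ.1, fun _ _ hxy => hρ.2.1 (hFE hxy), fun _ _ _ hxy hyz => hρ.2.2 (hFE hxy) (hFE hyz)⟩

lemma apply_self (hρ : IsCocycle E ρ) (hE : Equivalence E) (x : X) : ρ x x = 1 :=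
  (mul_eq_left₀ (hρ.2.1 (hE.refl x)).ne').1 (hρ.2.2 (hE.refl x) (hE.refl x)).symm

lemma mul_symm (hρ : IsCocycle E ρ) (hE : Equivalence E) (hxy : E x y) : ρ x y * ρ y x = 1 := by
  rw [← hρ.2.2 hxy (hE.symm hxy), hρ.apply_self hE]

protected lemma swap (hρ : IsCocycle E ρ) (hE : Equivalence E) : IsCocycle E fun x y => ρ y x :=
  ⟨hρ.1.comp measurable_swap, fun _ _ hxy => hρ.2.1 (hE.symm hxy), fun x y z hxy hyz => by
    simp only [hρ.2.2 (hE.symm hyz) (hE.symm hxy), mul_comm]⟩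

end IsCocycle

lemma eSize_mono {A A' : Set X} (hA : A ⊆ A') (x : X) : eSize ρ A x ≤ eSize ρ A' x :=
  ENNReal.tsum_mono_subtype (fun y => ENNReal.ofReal (ρ y x)) hA

lemma eSize_empty (x : X) : eSize ρ ∅ x = 0 := by
  simp [eSize]

lemma eSize_singleton (y x : X) : eSize ρ {y} x = ENNReal.ofReal (ρ y x) :=
  tsum_singleton y fun y => ENNReal.ofReal (ρ y x)

lemma IsCocycle.eSize_mul_ofReal [MeasurableSpace X] (hρ : IsCocycle E ρ) {A : Set X} {x x' : X}
    (hxx' : E x x') (hA : ∀ y ∈ A, E y x) :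
    eSize ρ A x * ENNReal.ofReal (ρ x x') = eSize ρ A x' := by
  rw [eSize, eSize, ← ENNReal.tsum_mul_right]
  refine tsum_congr fun y => ?_
  rw [hρ.2.2 (hA y y.2) hxx', ENNReal.ofReal_mul (hρ.2.1 (hA y y.2)).le]

lemma IsCocycle.eSize_eq_top [MeasurableSpace X] (hρ : IsCocycle E ρ) {A : Set X} {x x' : X}
    (hxx' : E x x') (hA : ∀ y ∈ A, E y x) (hAx : eSize ρ A x = ⊤) : eSize ρ A x' = ⊤ := by
  rw [← hρ.eSize_mul_ofReal hxx' hA, hAx,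
    ENNReal.top_mul (ENNReal.ofReal_pos.2 (hρ.2.1 hxx')).ne']

end Toolkit

section Conditions

variable [MeasurableSpace X]

/-- Condition (1): an injective Borel compression of the quotient of `ρ` by a finite Borel
subequivalence relation of `E`. -/
def HasInjectiveQuotientCompression (E : X → X → Prop) (ρ : X → X → ℝ) : Prop :=
  ∃ (F : X → X → Prop) (hF : Equivalence F), IsFinSubequiv E F ∧
    ∃ φ : Quotient (Setoid.mk F hF) → Quotient (Setoid.mk F hF),
      Measurable φ ∧ Function.Injective φ ∧
      QuotCompressionOn E ρ Set.univ (Setoid.mk F hF) φ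

/-- Condition (2): a Borel subequivalence relation of `E` on which `ρ` is aperiodic and smooth. -/
def HasAperiodicSmoothSubrelation (E : X → X → Prop) (ρ : X → X → ℝ) : Prop :=
  ∃ F : X → X → Prop, Equivalence F ∧ MeasurableSet {p : X × X | F p.1 p.2} ∧
    (∀ ⦃x y : X⦄, F x y → E x y) ∧
    (∀ x : X, eSize ρ {y | F y x} x = ⊤) ∧ Smooth F ρ

/-- Condition (3): a Borel subequivalence relation of `E` that is smooth and `ρ`-aperiodic off an
`E`-invariant Borel set `B`, on which there is a strictly increasing Borel automorphism. The
automorphism is encoded as an automorphism of `X` preserving `B`. -/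
def HasSmoothIncreasingDecomposition (E : X → X → Prop) (ρ : X → X → ℝ) : Prop :=
  ∃ B : Set X, MeasurableSet B ∧ EInvariant E B ∧
    ∃ F : X → X → Prop, Equivalence F ∧ MeasurableSet {p : X × X | F p.1 p.2} ∧
      (∀ ⦃x y : X⦄, F x y → E x y) ∧
      (∃ T : Set X, MeasurableSet T ∧ T ⊆ Bᶜ ∧ ∀ x ∈ Bᶜ, ∃! y, y ∈ T ∧ F x y) ∧
      (∀ x ∉ B, eSize ρ {y | F y x ∧ y ∉ B} x = ⊤) ∧
      (∃ T : X ≃ᵐ X, (∀ x ∈ B, T x ∈ B ∧ F x (T x)) ∧ (∀ x ∈ B, T.symm x ∈ B) ∧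
        ∀ x ∈ B, eSize ρ {y | y ∈ B ∧ T y = x} x < 1)

end Conditions

section Lacunary

variable {E F K : X → X → Prop} {ρ : X → X → ℝ} {x y y' z : X}

/-- The values of `ρ` on distinct `K`-related points stay away from `1` by a uniform factor.
Values below `1` are inverses of values above `1`, so only the latter are mentioned. -/
def IsLacunary (K : X → X → Prop) (ρ : X → X → ℝ) : Prop :=
  ∃ l : ℝ, 1 < l ∧ ∀ ⦃x y⦄, K x y → x ≠ y → 1 ≤ ρ x y → l ≤ ρ x y

/-- `y` is the immediate successor of `x` in its `K`-class, ordered by increasing `ρ`. -/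
def IsSucc (K : X → X → Prop) (ρ : X → X → ℝ) (x y : X) : Prop :=
  K x y ∧ 1 < ρ y x ∧ ∀ z, K x z → 1 < ρ z x → ρ y x ≤ ρ z x

/-- The part of `F` relating points of the same color. -/
def colorSubrelation (F : X → X → Prop) (c : X → ℕ) (x y : X) : Prop :=
  F x y ∧ c x = c y

/-- `x` has the greatest `ρ`-mass in its `K`-class. -/
def IsHeaviest (K : X → X → Prop) (ρ : X → X → ℝ) (x : X) : Prop :=
  ∀ z, K x z → ρ z x ≤ 1

lemma Smooth.exists_isLacunary [MeasurableSpace X] (h : Smooth F ρ) :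
    ∃ c : X → ℕ, Measurable c ∧ IsLacunary (colorSubrelation F c) ρ := by
  obtain ⟨U, hUo, hU1, -, c, hc, hcol⟩ := h
  obtain ⟨ε, hε, hball⟩ := Metric.isOpen_iff.1 hUo 1 hU1
  refine ⟨c, hc, 1 + ε, by linarith, fun x y hxy hne h1 => ?_⟩
  by_contra! hlt
  refine hcol (mem_univ _) (mem_univ _) hne hxy.1 (hball ?_) hxy.2
  rw [Metric.mem_ball, Real.dist_eq, abs_lt]
  constructor <;> linarith

protected lemma IsLacunary.swap (hL : IsLacunary K ρ) (hK : Equivalence K) :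
    IsLacunary K fun x y => ρ y x :=
  hL.imp fun _ hl => ⟨hl.1, fun _ _ hxy hne => hl.2 (hK.symm hxy) hne.symm⟩

variable [MeasurableSpace X]

protected lemma IsCBER.colorSubrelation (hF : IsCBER F) {c : X → ℕ} (hc : Measurable c) :
    IsCBER (colorSubrelation F c) := by
  have hFm := hF.measurable
  exact hF.of_subrelation ⟨fun x => ⟨hF.1.refl x, rfl⟩, fun h => ⟨hF.1.symm h.1, h.2.symm⟩,
    fun h h' => ⟨hF.1.trans h.1 h'.1, h.2.trans h'.2⟩⟩
    (measurableSet_setOfPred.2 (by unfold colorSubrelation; fun_prop)) fun _ _ h => h.1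

lemma IsLacunary.eq_of_apply_eq (hL : IsLacunary K ρ) (hK : Equivalence K) (hρ : IsCocycle K ρ)
    (hxy : K x y) (hyy' : K y y') (h : ρ y x = ρ y' x) : y = y' := by
  obtain ⟨l, hl, hlac⟩ := hL
  have hone : ρ y y' = 1 := by
    have := hρ.2.2 hyy' (hK.symm (hK.trans hxy hyy'))
    exact (mul_eq_right₀ (hρ.2.1 (hK.symm (hK.trans hxy hyy'))).ne').1 (this ▸ h)
  by_contra hne
  linarith [hlac hyy' hne hone.ge]

lemma IsLacunary.exists_isSucc (hL : IsLacunary K ρ) (hK : Equivalence K) (hρ : IsCocycle K ρ)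
    (hx : ¬IsHeaviest K ρ x) : ∃ y, IsSucc K ρ x y := by
  obtain ⟨l, hl, hlac⟩ := hL
  let A : Set ℝ := {r | ∃ z, K x z ∧ 1 < ρ z x ∧ ρ z x = r}
  have hA : A.Nonempty := by
    simp only [IsHeaviest, not_forall, not_le] at hx
    obtain ⟨z, hxz, hz⟩ := hx
    exact ⟨_, z, hxz, hz, rfl⟩
  have hA1 : ∀ r ∈ A, 1 ≤ r := fun _ ⟨_, _, hz, hr⟩ => hr ▸ hz.le
  have hlt : sInf A < sInf A * l := lt_mul_of_one_lt_right (by linarith [le_csInf hA hA1]) hl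
  obtain ⟨_, ⟨y, hxy, hy1, rfl⟩, hy⟩ := exists_lt_of_csInf_lt hA hlt
  refine ⟨y, hxy, hy1, fun z hxz hz1 => ?_⟩
  by_contra! hzy
  have hyz : K y z := hK.trans (hK.symm hxy) hxz
  have hmul : ρ y x = ρ y z * ρ z x := hρ.2.2 hyz (hK.symm hxz)
  have hyz1 : 1 < ρ y z := by nlinarith
  have hlyz : l ≤ ρ y z := hlac hyz (fun h => hzy.ne' (h ▸ rfl)) hyz1.le
  nlinarith [csInf_le ⟨1, hA1⟩ ⟨z, hxz, hz1, rfl⟩]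

lemma IsSucc.unique (hL : IsLacunary K ρ) (hK : Equivalence K) (hρ : IsCocycle K ρ)
    (h : IsSucc K ρ x y) (h' : IsSucc K ρ x y') : y = y' :=
  hL.eq_of_apply_eq hK hρ h.1 (hK.trans (hK.symm h.1) h'.1)
    (le_antisymm (h.2.2 y' h'.1 h'.2.1) (h'.2.2 y h.1 h.2.1))

lemma IsSucc.swap (hK : Equivalence K) (hρ : IsCocycle K ρ) (h : IsSucc K ρ x y) :
    IsSucc K (fun a b => ρ b a) y x := by
  refine ⟨hK.symm h.1, h.2.1, fun z hyz hz1 => ?_⟩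
  have hxz : K x z := hK.trans h.1 hyz
  have hmul : ρ y x = ρ y z * ρ z x := hρ.2.2 hyz (hK.symm hxz)
  by_contra! hlt
  have hzx : 1 < ρ z x := by nlinarith
  nlinarith [h.2.2 z hxz hzx]

lemma IsLacunary.eq_of_isHeaviest (hL : IsLacunary K ρ) (hK : Equivalence K) (hρ : IsCocycle K ρ)
    (hx : IsHeaviest K ρ x) (hy : IsHeaviest K ρ y) (hxy : K x y) : x = y := by
  refine hL.eq_of_apply_eq hK hρ (hK.refl x) hxy ?_
  rw [hρ.apply_self hK]
  have hmul := hρ.mul_symm hK hxy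
  have := hρ.2.1 hxy
  nlinarith [hx y hxy, hy x (hK.symm hxy)]

lemma IsCocycle.eSize_preimage_lt_one (hρ : IsCocycle E ρ) (hE : Equivalence E) {T : X → X}
    (hT : T.Injective) (hTE : ∀ x, E x (T x)) {B : Set X} (hTB : ∀ x ∈ B, 1 < ρ (T x) x) (x : X) :
    eSize ρ {y | y ∈ B ∧ T y = x} x < 1 := by
  rcases eq_empty_or_nonempty {y | y ∈ B ∧ T y = x} with hempty | ⟨y, hy, rfl⟩
  · rw [hempty, eSize_empty]
    exact one_pos
  · have hsub : {z | z ∈ B ∧ T z = T y} ⊆ {y} := fun z hz => hT hz.2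
    refine (eSize_mono hsub _).trans_lt ?_
    rw [eSize_singleton, ENNReal.ofReal_lt_one]
    nlinarith [hρ.mul_symm hE (hTE y), hTB y hy, hρ.2.1 (hTE y)]

variable [StandardBorelSpace X]

lemma IsCBER.measurable_isHeaviest (hK : IsCBER K) (hρ : Measurable fun p : X × X => ρ p.1 p.2) :
    Measurable (IsHeaviest K ρ) :=
  hK.measurable_forall measurable_id (by fun_prop)

lemma IsCBER.measurable_isSucc (hK : IsCBER K) (hρ : Measurable fun p : X × X => ρ p.1 p.2) :
    Measurable fun p : X × X => IsSucc K ρ p.1 p.2 := by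
  have hKm := hK.measurable
  have hforall : Measurable fun p : X × X => ∀ z, K p.1 z → 1 < ρ z p.1 → ρ p.2 p.1 ≤ ρ z p.1 :=
    hK.measurable_forall measurable_fst (by fun_prop)
  unfold IsSucc
  fun_prop

lemma IsLacunary.exists_measurable_isSucc (hL : IsLacunary K ρ) (hK : IsCBER K)
    (hρ : IsCocycle K ρ) {B : Set X} (hB : MeasurableSet B)
    (hBmax : ∀ x ∈ B, ¬IsHeaviest K ρ x) :
    ∃ T : X → X, Measurable T ∧ (∀ x, K x (T x)) ∧ (∀ x ∈ B, IsSucc K ρ x (T x)) ∧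
      ∀ x ∉ B, T x = x := by
  have hSm := hK.measurable_isSucc hρ.1
  obtain ⟨T, hT, hKT, hTsucc, hTid⟩ := hK.exists_measurable_selector
    (R := fun x y => x ∈ B ∧ IsSucc K ρ x y) (by fun_prop)
  refine ⟨T, hT, hKT, fun x hx => ?_, fun x hx => hTid x (.inr fun y _ h => hx h.1)⟩
  obtain ⟨y, hy⟩ := hL.exists_isSucc hK.1 hρ (hBmax x hx)
  exact (hTsucc x y hy.1 ⟨hx, hy⟩).2

lemma IsLacunary.exists_increasing_measurableEquiv (hL : IsLacunary K ρ) (hK : IsCBER K)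
    (hρ : IsCocycle K ρ) {B : Set X} (hB : MeasurableSet B) (hBK : EInvariant K B)
    (hBmax : ∀ x ∈ B, ¬IsHeaviest K ρ x) (hBmin : ∀ x ∈ B, ¬IsHeaviest K (fun x y => ρ y x) x) :
    ∃ T : X ≃ᵐ X, (∀ x, K x (T x)) ∧ ∀ x ∈ B, 1 < ρ (T x) x := by
  have hL' := hL.swap hK.1
  have hρ' := hρ.swap hK.1
  obtain ⟨T, hT, hKT, hTsucc, hTid⟩ := hL.exists_measurable_isSucc hK hρ hB hBmax
  obtain ⟨S, hS, hKS, hSsucc, hSid⟩ := hL'.exists_measurable_isSucc hK hρ' hB hBmin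
  have hST : Function.LeftInverse S T := fun x => by
    by_cases hx : x ∈ B
    · exact (hSsucc _ (hBK (hKT x) hx)).unique hL' hK.1 hρ' ((hTsucc x hx).swap hK.1 hρ)
    · rw [hTid x hx, hSid x hx]
  have hTS : Function.RightInverse S T := fun x => by
    by_cases hx : x ∈ B
    · exact (hTsucc _ (hBK (hKS x) hx)).unique hL hK.1 hρ ((hSsucc x hx).swap hK.1 hρ')
    · rw [hSid x hx, hTid x hx]
  exact ⟨⟨⟨T, S, hST, hTS⟩, hT, hS⟩, hKT, fun x hx => (hTsucc x hx).2.1⟩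

lemma IsCBER.exists_measurableSet_existsUnique (hF : IsCBER F) {A : Set X} (hA : MeasurableSet A)
    {k : X → ℕ} (hk : Measurable k)
    (hinj : ∀ ⦃x y⦄, x ∈ A → y ∈ A → F x y → k x = k y → x = y) :
    ∃ T ⊆ A, MeasurableSet T ∧ (∀ ⦃x y⦄, x ∈ T → y ∈ T → F x y → x = y) ∧
      ∀ x ∈ A, ∃ y ∈ T, F x y := by
  refine ⟨{x | x ∈ A ∧ ∀ y, F x y → y ∈ A → k x ≤ k y}, fun x hx => hx.1, ?_, ?_, fun x hx => ?_⟩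
  · exact hA.inter (measurableSet_setOfPred.2
      (hF.measurable_forall measurable_id (by fun_prop)))
  · exact fun x y hx hy hxy => hinj hx.1 hy.1 hxy
      (le_antisymm (hx.2 y hxy hy.1) (hy.2 x (hF.1.symm hxy) hx.1))
  · obtain ⟨y, ⟨hxy, hyA⟩, hmin⟩ := exists_minimalFor_of_wellFoundedLT
      (fun y => F x y ∧ y ∈ A) k ⟨x, hF.1.refl x, hx⟩
    exact ⟨y, ⟨hyA, fun z hyz hz => le_of_not_gt fun hlt =>
      hlt.not_ge (hmin ⟨hF.1.trans hxy hyz, hz⟩ hlt.le)⟩, hxy⟩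

-- The heaviest and the lightest points of a color are told apart by the parity of `k`.
lemma IsLacunary.exists_partial_transversal {c : X → ℕ}
    (hL : IsLacunary (colorSubrelation F c) ρ) (hF : IsCBER F) (hc : Measurable c)
    (hρ : IsCocycle F ρ) :
    ∃ T : Set X, MeasurableSet T ∧ (∀ ⦃x y⦄, x ∈ T → y ∈ T → F x y → x = y) ∧
      ∀ x, IsHeaviest (colorSubrelation F c) ρ x ∨
        IsHeaviest (colorSubrelation F c) (fun x y => ρ y x) x → ∃ y ∈ T, F x y := by
  classical
  have hK := hF.colorSubrelation hc
  have hρK : IsCocycle (colorSubrelation F c) ρ := hρ.mono fun _ _ h => h.1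
  have hmax := measurableSet_setOfPred.2 (hK.measurable_isHeaviest hρ.1)
  have hmin := measurableSet_setOfPred.2 (hK.measurable_isHeaviest (ρ := fun x y => ρ y x)
    (hρK.swap hK.1).1)
  let k : X → ℕ := fun x => 2 * c x + if IsHeaviest (colorSubrelation F c) ρ x then 0 else 1
  have hk : Measurable k :=
    (hc.const_mul 2).add (Measurable.ite hmax measurable_const measurable_const)
  obtain ⟨T, -, hT, hTF, hex⟩ := hF.exists_measurableSet_existsUnique (hmax.union hmin) hk
    fun x y hx hy hxy hkxy => by
      by_cases hx' : IsHeaviest (colorSubrelation F c) ρ x <;>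
        by_cases hy' : IsHeaviest (colorSubrelation F c) ρ y <;>
          simp only [k, hx', hy', if_true, if_false] at hkxy
      · exact hL.eq_of_isHeaviest hK.1 hρK hx' hy' ⟨hxy, by omega⟩
      · omega
      · omega
      · exact (hL.swap hK.1).eq_of_isHeaviest hK.1 (hρK.swap hK.1) (hx.resolve_left hx')
          (hy.resolve_left hy') ⟨hxy, by omega⟩
  exact ⟨T, hT, hTF, hex⟩

lemma IsCBER.exists_aperiodic_extension_of_partial_transversal (hE : IsCBER E) (hF : IsCBER F)
    (hFE : ∀ ⦃x y⦄, F x y → E x y) (hρ : IsCocycle E ρ)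
    (haper : ∀ x, eSize ρ {y | F y x} x = ⊤) {T : Set X} (hT : MeasurableSet T)
    (hTF : ∀ ⦃x y⦄, x ∈ T → y ∈ T → F x y → x = y) :
    ∃ F' : X → X → Prop, IsCBER F' ∧ (∀ ⦃x y⦄, F' x y → E x y) ∧
      (∀ x, (∀ z, E x z → z ∉ T) → ∀ y, F x y → F' x y) ∧
      ∀ x z, E x z → z ∈ T → (∃! y, y ∈ T ∧ F' x y) ∧ eSize ρ {y | F' y x} x = ⊤ := by
  have hDm : Measurable fun x => ∃ z, F x z ∧ z ∈ T :=
    hF.measurable_exists measurable_id (by fun_prop)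
  obtain ⟨r, hr, hrE, hrD, hrid⟩ := hE.exists_measurable_selector
    (R := fun _ y => ∃ z, F y z ∧ z ∈ T) (hDm.comp measurable_snd)
  have hrid' : ∀ x y, F x y → y ∈ T → r x = x := fun x y hxy hy => hrid x (.inl ⟨y, hxy, hy⟩)
  have hrT : ∀ x ∈ T, r x = x := fun x hx => hrid' x x (hF.1.refl x) hx
  obtain ⟨hF', hF'E⟩ := hF.comap hE hFE hr hrE
  refine ⟨_, hF', hF'E, fun x hx y hxy => ?_, fun x z hxz hz => ?_⟩
  · have hno : ∀ w, E x w → ¬∃ z, F w z ∧ z ∈ T := fun w hxw ⟨z, hwz, hz⟩ =>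
      hx z (hE.1.trans hxw (hFE hwz)) hz
    rwa [hrid x (.inr hno), hrid y (.inr fun w hyw => hno w (hE.1.trans (hFE hxy) hyw))]
  obtain ⟨t, hrt, ht⟩ := hrD x z hxz ⟨z, hF.1.refl z, hz⟩
  refine ⟨⟨t, ⟨ht, by rwa [hrT t ht]⟩, fun y ⟨hy, hxy⟩ => ?_⟩, top_unique ?_⟩
  · rw [hrT y hy] at hxy
    exact hTF hy ht (hF.1.trans (hF.1.symm hxy) hrt)
  · have hsub : {y | F y (r x)} ⊆ {y | F (r y) (r x)} := fun y hy => by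
      rwa [mem_ofPred_eq, hrid' y t (hF.1.trans hy hrt) ht]
    exact (hρ.eSize_eq_top (hE.1.symm (hrE x)) (fun y hy => hFE hy) (haper (r x))).symm.le.trans
      (eSize_mono hsub x)

theorem HasAperiodicSmoothSubrelation.hasSmoothIncreasingDecomposition (hE : IsCBER E)
    (hρ : IsCocycle E ρ) (h : HasAperiodicSmoothSubrelation E ρ) :
    HasSmoothIncreasingDecomposition E ρ := by
  obtain ⟨F, hFeq, hFm, hFE, haper, hsmooth⟩ := h
  have hF : IsCBER F := hE.of_subrelation hFeq hFm hFE
  obtain ⟨c, hc, hL⟩ := hsmooth.exists_isLacunary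
  have hK := hF.colorSubrelation hc
  obtain ⟨T, hT, hTF, hTex⟩ := hL.exists_partial_transversal hF hc (hρ.mono hFE)
  obtain ⟨F', hF', hF'E, hFF', hF'T⟩ :=
    hE.exists_aperiodic_extension_of_partial_transversal hF hFE hρ haper hT hTF
  let B : Set X := {x | ∀ z, E x z → z ∉ T}
  have hB : MeasurableSet B :=
    measurableSet_setOfPred.2 (hE.measurable_forall measurable_id (by fun_prop))
  have hBE : EInvariant E B := fun x y hxy hx z hyz => hx z (hE.1.trans hxy hyz)
  have hF'B : ∀ x ∉ B, (∃! y, y ∈ T ∧ F' x y) ∧ eSize ρ {y | F' y x} x = ⊤ := fun x hx => by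
    simp only [B, mem_ofPred_eq, not_forall, not_not] at hx
    obtain ⟨z, hxz, hz⟩ := hx
    exact hF'T x z hxz hz
  have hext : ∀ x ∈ B, ¬(IsHeaviest (colorSubrelation F c) ρ x ∨
      IsHeaviest (colorSubrelation F c) (fun x y => ρ y x) x) := fun x hx h =>
    let ⟨y, hy, hxy⟩ := hTex x h
    hx y (hFE hxy) hy
  obtain ⟨S, hKS, hS⟩ := hL.exists_increasing_measurableEquiv hK (hρ.mono fun _ _ h => hFE h.1) hB
    (fun x y hxy => hBE (hFE hxy.1)) (fun x hx h => hext x hx (.inl h))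
    fun x hx h => hext x hx (.inr h)
  have hES : ∀ x, E x (S x) := fun x => hFE (hKS x).1
  have hES' : ∀ x, E x (S.symm x) := fun x => by
    simpa only [S.apply_symm_apply] using hE.1.symm (hES (S.symm x))
  refine ⟨B, hB, hBE, F', hF'.1, hF'.2.1, hF'E,
    ⟨T, hT, fun y hy hyB => hyB y (hE.1.refl y) hy, fun x hx => (hF'B x hx).1⟩, fun x hx => ?_,
    S, fun x hx => ⟨hBE (hES x) hx, hFF' x hx _ (hKS x).1⟩, fun x hx => hBE (hES' x) hx,
    fun x _ => hρ.eSize_preimage_lt_one hE.1 S.injective hES hS x⟩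
  have hsub : {y | F' y x} ⊆ {y | F' y x ∧ y ∉ B} := fun y hy =>
    ⟨hy, fun hyB => hx (hBE (hF'E hy) hyB)⟩
  exact top_unique ((hF'B x hx).2.symm.le.trans (eSize_mono hsub x))

end Lacunary

section Blocks

variable {E F : X → X → Prop} {ρ : X → X → ℝ}

lemma eSize_union_le (A A' : Set X) (x : X) : eSize ρ (A ∪ A') x ≤ eSize ρ A x + eSize ρ A' x :=
  ENNReal.tsum_union_le (fun y => ENNReal.ofReal (ρ y x)) A A'

lemma eSize_ne_top_of_finite {A : Set X} (hA : A.Finite) (x : X) : eSize ρ A x ≠ ⊤ := by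
  have := hA.fintype
  rw [eSize, tsum_fintype]
  exact ENNReal.sum_ne_top.2 fun _ _ => ENNReal.ofReal_ne_top

lemma exists_finite_subset_le_eSize {A : Set X} {x : X} (hA : eSize ρ A x = ⊤) {C : ℝ≥0∞}
    (hC : C ≠ ⊤) : ∃ S ⊆ A, S.Finite ∧ C ≤ eSize ρ S x := by
  rw [eSize, ENNReal.tsum_eq_iSup_sum] at hA
  obtain ⟨S, hS⟩ := lt_iSup_iff.1 (hA ▸ hC.lt_top)
  refine ⟨Subtype.val '' (S : Set A), Subtype.coe_image_subset _ _, S.finite_toSet.image _, ?_⟩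
  rw [eSize, tsum_image (fun y => ENNReal.ofReal (ρ y x)) Subtype.val_injective.injOn,
    Finset.tsum_subtype' S fun y => ENNReal.ofReal (ρ y x)]
  exact hS.le

/-- The times at which `P` has more than doubled since the previous such time. They cut an
enumerated `ρ`-infinite set, `P n` being the `ρ`-size of its first `n` points, into blocks of
increasing `ρ`-size. -/
noncomputable def doublingTime (P : ℕ → ℝ≥0∞) : ℕ → ℕ
  | 0 => 0
  | k + 1 => sInf {n | 2 * P (doublingTime P k) + 1 ≤ P n}

lemma two_mul_apply_doublingTime_add_one_le {P : ℕ → ℝ≥0∞} (hfin : ∀ n, P n ≠ ⊤)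
    (hP : ∀ C ≠ ⊤, ∃ n, C ≤ P n) (k : ℕ) :
    2 * P (doublingTime P k) + 1 ≤ P (doublingTime P (k + 1)) :=
  Nat.sInf_mem (hP _ (by simp [ENNReal.mul_eq_top, hfin]))

lemma strictMono_doublingTime {P : ℕ → ℝ≥0∞} (hmono : Monotone P) (hfin : ∀ n, P n ≠ ⊤)
    (hP : ∀ C ≠ ⊤, ∃ n, C ≤ P n) : StrictMono (doublingTime P) :=
  strictMono_nat_of_lt_succ fun k => hmono.reflect_lt <| by
    refine lt_of_lt_of_le ?_ (two_mul_apply_doublingTime_add_one_le hfin hP k)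
    rw [two_mul, add_assoc]
    exact ENNReal.lt_add_right (hfin _) (by simp)

lemma measurable_doublingTime [MeasurableSpace X] {P : ℕ → X → ℝ≥0∞} (hP : ∀ n, Measurable (P n))
    (k : ℕ) : Measurable fun x => doublingTime (fun n => P n x) k := by
  induction k with
  | zero => exact measurable_const
  | succ k ih =>
    have hPk : Measurable fun x => P (doublingTime (fun n => P n x) k) x :=
      (measurable_from_prod_countable_right (f := fun p => P p.1 p.2) hP).comp
        (ih.prodMk measurable_id)
    exact measurable_sInf_nat fun n =>
      measurableSet_setOfPred.1 (measurableSet_le ((hPk.const_mul 2).add_const 1) (hP n))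

lemma sInf_lt_eq_iff {a : ℕ → ℕ} (ha : StrictMono a) (ha0 : a 0 = 0) {i k : ℕ} :
    sInf {k | i < a (k + 1)} = k ↔ a k ≤ i ∧ i < a (k + 1) := by
  have hne : {k | i < a (k + 1)}.Nonempty := ⟨i, (ha.id_le (i + 1)).trans_lt' i.lt_succ_self⟩
  refine ⟨?_, fun ⟨hk, hk'⟩ => le_antisymm (Nat.sInf_le hk') (le_csInf hne fun j hj => ?_)⟩
  · rintro rfl
    refine ⟨?_, Nat.sInf_mem hne⟩
    rcases h : sInf {k | i < a (k + 1)} with _ | m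
    · exact ha0.trans_le i.zero_le
    · exact not_lt.1 (Nat.notMem_of_lt_sInf (s := {k | i < a (k + 1)}) (by omega) : ¬i < a (m + 1))
  · exact Nat.lt_succ_iff.1 (ha.lt_iff_lt.1 (hk.trans_lt hj))

open Classical in
lemma piecewise_rel_iff {R : X → X → Prop} {B : Set X} {f g : X → X}
    (hRB : ∀ x y, R x y → (x ∈ B ↔ y ∈ B)) (hB : ∀ x, B.piecewise f g x ∈ B ↔ x ∈ B)
    (hf : ∀ x ∈ B, ∀ y ∈ B, R (f x) (f y) ↔ R x y)
    (hg : ∀ x ∉ B, ∀ y ∉ B, R (g x) (g y) ↔ R x y) {x y : X} :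
    R (B.piecewise f g x) (B.piecewise f g y) ↔ R x y := by
  by_cases hxy : x ∈ B ↔ y ∈ B
  · by_cases hx : x ∈ B
    · rw [piecewise_eq_of_mem _ _ _ hx, piecewise_eq_of_mem _ _ _ (hxy.1 hx),
        hf x hx y (hxy.1 hx)]
    · rw [piecewise_eq_of_notMem _ _ _ hx, piecewise_eq_of_notMem _ _ _ (hx ∘ hxy.2),
        hg x hx y (hx ∘ hxy.2)]
  · exact iff_of_false (fun h => hxy ((hB x).symm.trans ((hRB _ _ h).trans (hB y))))
      (hxy ∘ hRB x y)

-- The block of index `k` gains more than everything before it, in particular than block `k - 1`.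
lemma eSize_block_lt_eSize_block_succ {A : Set X} {i : X → ℕ} {x : X} {a : ℕ → ℕ}
    (hfin : ∀ n, eSize ρ {y ∈ A | i y < n} x ≠ ⊤)
    (ha : ∀ k, 2 * eSize ρ {y ∈ A | i y < a k} x + 1 ≤ eSize ρ {y ∈ A | i y < a (k + 1)} x)
    (k : ℕ) :
    eSize ρ {y ∈ A | a k ≤ i y ∧ i y < a (k + 1)} x <
      eSize ρ {y ∈ A | a (k + 1) ≤ i y ∧ i y < a (k + 1 + 1)} x := by
  set P : ℕ → ℝ≥0∞ := fun n => eSize ρ {y ∈ A | i y < n} x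
  have hinit : {y ∈ A | a k ≤ i y ∧ i y < a (k + 1)} ⊆ {y ∈ A | i y < a (k + 1)} :=
    fun y hy => ⟨hy.1, hy.2.2⟩
  have hcover : {y ∈ A | i y < a (k + 1 + 1)} ⊆
      {y ∈ A | i y < a (k + 1)} ∪ {y ∈ A | a (k + 1) ≤ i y ∧ i y < a (k + 1 + 1)} := fun y hy =>
    (lt_or_ge (i y) (a (k + 1))).imp (fun h => ⟨hy.1, h⟩) fun h => ⟨hy.1, h, hy.2⟩
  refine (eSize_mono hinit x).trans_lt
    (lt_of_lt_of_le (ENNReal.lt_add_right (hfin _) one_ne_zero) ?_)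
  refine (ENNReal.add_le_add_iff_left (hfin (a (k + 1)))).1 ?_
  calc P (a (k + 1)) + (P (a (k + 1)) + 1) = 2 * P (a (k + 1)) + 1 := by ring
    _ ≤ P (a (k + 1 + 1)) := ha (k + 1)
    _ ≤ _ := (eSize_mono hcover x).trans (eSize_union_le _ _ x)

variable [MeasurableSpace X]

lemma IsCocycle.eSize_lt_eSize (hρ : IsCocycle E ρ) {A A' : Set X} {x x' : X} (hxx' : E x x')
    (hA : ∀ y ∈ A, E y x) (hA' : ∀ y ∈ A', E y x) (h : eSize ρ A x < eSize ρ A' x) :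
    eSize ρ A x' < eSize ρ A' x' := by
  rw [← hρ.eSize_mul_ofReal hxx' hA, ← hρ.eSize_mul_ofReal hxx' hA']
  exact ENNReal.mul_lt_mul_left (ENNReal.ofReal_pos.2 (hρ.2.1 hxx')).ne' ENNReal.ofReal_ne_top h

lemma IsCocycle.one_le_eSize (hρ : IsCocycle E ρ) (hE : Equivalence E) {A : Set X} {x : X}
    (hx : x ∈ A) : 1 ≤ eSize ρ A x := by
  rw [← ENNReal.ofReal_one, ← hρ.apply_self hE x, ← eSize_singleton]
  exact eSize_mono (singleton_subset_iff.2 hx) x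

lemma hasInjectiveQuotientCompression_of_map (hE : Equivalence E) (hF : IsFinSubequiv E F)
    {ψ : X → X} (hψ : Measurable ψ) (hψF : ∀ x y, F (ψ x) (ψ y) ↔ F x y) (hψE : ∀ x, E x (ψ x))
    (hlt : ∀ x, eSize ρ {y | F (ψ y) x} x < eSize ρ {y | F y x} x) :
    HasInjectiveQuotientCompression E ρ := by
  let s : Setoid X := ⟨F, hF.1⟩
  have hmk : ∀ {x y : X}, Quotient.mk s x = Quotient.mk s y ↔ F x y := Quotient.eq
  let φ : Quotient s → Quotient s := Quotient.map ψ fun x y => (hψF x y).2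
  have hpre : ∀ x, {y | y ∈ univ ∧ φ (Quotient.mk s y) = Quotient.mk s x} = {y | F (ψ y) x} :=
    fun x => ext fun y => ⟨fun h => hmk.1 h.2, fun h => ⟨mem_univ y, hmk.2 h⟩⟩
  refine ⟨F, hF.1, hF, φ, measurable_from_quotient.2 (measurable_quotient_mk'.comp hψ), ?_,
    fun x _ y hxy => ⟨hE.trans (hψE x) (hF.2.2.1 (hmk.1 hxy)), mem_univ y⟩, fun x _ => ?_,
    fun x _ => ⟨x, mem_univ x, hE.refl x, ?_⟩⟩
  · rintro ⟨x⟩ ⟨y⟩ hxy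
    exact hmk.2 ((hψF x y).1 (hmk.1 hxy))
  · exact ENNReal.div_le_of_le_mul (by rw [hpre, one_mul]; exact (hlt x).le)
  · exact ENNReal.div_lt_of_lt_mul (by rw [hpre, one_mul]; exact hlt x)

variable [StandardBorelSpace X]

lemma IsCBER.exists_index_of_fibers (hE : IsCBER E) {s : X → X} (hs : Measurable s)
    (hsE : ∀ x, E x (s x)) :
    ∃ i : X → ℕ, Measurable i ∧ ∀ x y, s x = s y → i x = i y → x = y := by
  obtain ⟨f, hf, -, -, hfs⟩ := hE.exists_enumeration
  let i (x : X) : ℕ := sInf {n | f n (s x) = x}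
  have hfi : ∀ x, f (i x) (s x) = x := fun x => Nat.sInf_mem (hfs _ _ (hE.1.symm (hsE x)))
  exact ⟨i, measurable_sInf_nat fun n => by fun_prop,
    fun x y hs hi => by rw [← hfi x, ← hfi y, hi, hs]⟩

lemma IsCBER.exists_blocks (hE : IsCBER E) (hρ : Measurable fun p : X × X => ρ p.1 p.2)
    {s : X → X} (hs : Measurable s) (hsE : ∀ x, E x (s x)) :
    ∃ K : X → ℕ, Measurable K ∧ ∀ t, eSize ρ {y | s y = t} t = ⊤ → ∀ k,
      {y | s y = t ∧ K y = k}.Finite ∧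
        eSize ρ {y | s y = t ∧ K y = k} t < eSize ρ {y | s y = t ∧ K y = k + 1} t := by
  obtain ⟨i, hi, hinj⟩ := hE.exists_index_of_fibers hs hsE
  have hfib : ∀ n t, {y | E t y ∧ (s y = t ∧ i y < n)} = {y ∈ {y | s y = t} | i y < n} :=
    fun n t => ext fun y => ⟨And.right, fun hy => ⟨hy.1 ▸ hE.1.symm (hsE y), hy⟩⟩
  have hbelow : ∀ n t, {y ∈ {y | s y = t} | i y < n}.Finite := fun n t =>
    .of_finite_image ((finite_Iio n).subset (image_subset_iff.2 fun y hy => hy.2))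
      fun x hx y hy => hinj x y (hx.1.trans hy.1.symm)
  let P (n : ℕ) (t : X) : ℝ≥0∞ := eSize ρ {y ∈ {y | s y = t} | i y < n} t
  have hP : ∀ n, Measurable (P n) := fun n => by
    simp only [P, ← hfib]
    exact hE.measurable_eSize hρ measurable_id measurable_id (by fun_prop)
  have hPfin : ∀ n t, P n t ≠ ⊤ := fun n t => eSize_ne_top_of_finite (hbelow n t) t
  have hPmono : ∀ t, Monotone fun n => P n t := fun t m n hmn =>
    eSize_mono (inter_subset_inter_right _ fun y (hy : i y < m) => hy.trans_le hmn) t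
  let a (t : X) : ℕ → ℕ := doublingTime fun n => P n t
  have ha : ∀ k, Measurable fun t => a t k := measurable_doublingTime hP
  have : ∀ k, Measurable fun x => a (s x) k := fun k => (ha k).comp hs
  refine ⟨fun x => sInf {k | i x < a (s x) (k + 1)}, measurable_sInf_nat fun k => by fun_prop,
    fun t ht => ?_⟩
  have hPtop : ∀ C ≠ ⊤, ∃ n, C ≤ P n t := fun C hC => by
    obtain ⟨S, hSt, hS, hCS⟩ := exists_finite_subset_le_eSize ht hC
    obtain ⟨n, hn⟩ := (hS.image i).bddAbove
    have hSn : S ⊆ {y ∈ {y | s y = t} | i y < n + 1} := fun y hy =>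
      ⟨hSt hy, Nat.lt_succ_iff.2 (hn (mem_image_of_mem i hy))⟩
    exact ⟨n + 1, hCS.trans (eSize_mono hSn t)⟩
  have hblock : ∀ k, {y | s y = t ∧ sInf {k | i y < a (s y) (k + 1)} = k} =
      {y ∈ {y | s y = t} | a t k ≤ i y ∧ i y < a t (k + 1)} := fun k => ext fun y =>
    and_congr_right fun hy => by
      rw [hy]
      exact sInf_lt_eq_iff (strictMono_doublingTime (hPmono t) (hPfin · t) hPtop) rfl
  refine fun k => ⟨(hbelow (a t (k + 1)) t).subset ?_, ?_⟩
  · exact (hblock k).subset.trans fun y hy => ⟨hy.1, hy.2.2⟩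
  · rw [hblock, hblock]
    exact eSize_block_lt_eSize_block_succ (hPfin · t)
      (two_mul_apply_doublingTime_add_one_le (hPfin · t) hPtop) k

lemma IsCBER.exists_block_shift (hE : IsCBER E) (hρ : IsCocycle E ρ) {s : X → X}
    (hs : Measurable s) (hsE : ∀ x, E x (s x)) {A : Set X}
    (hinf : ∀ x ∈ A, eSize ρ {y | s y = s x} (s x) = ⊤) :
    ∃ (K : X → ℕ) (φ : X → X), Measurable K ∧ Measurable φ ∧ (∀ x, E x (φ x)) ∧
      ∀ x ∈ A, s (φ x) = s x ∧ K (φ x) = K x + 1 ∧ {y | s y = s x ∧ K y = K x}.Finite ∧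
        eSize ρ {y | s y = s x ∧ K y + 1 = K x} x < eSize ρ {y | s y = s x ∧ K y = K x} x := by
  obtain ⟨K, hK, hblocks⟩ := hE.exists_blocks hρ.1 hs hsE
  obtain ⟨φ, hφ, hφE, hφnext, -⟩ := hE.exists_measurable_selector
    (R := fun x y => s y = s x ∧ K y = K x + 1) (by fun_prop)
  have hsub : ∀ (p : ℕ → Prop) x, ∀ y ∈ {y | s y = s x ∧ p (K y)}, E y (s x) :=
    fun p x y hy => hy.1 ▸ hsE y
  refine ⟨K, φ, hK, hφ, hφE, fun x hx => ?_⟩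
  obtain ⟨hfin, hlt⟩ := hblocks (s x) (hinf x hx) (K x)
  obtain ⟨y, hys, hyK⟩ : {y | s y = s x ∧ K y = K x + 1}.Nonempty := by
    rw [nonempty_iff_ne_empty]
    intro h
    rw [h, eSize_empty] at hlt
    exact hlt.not_ge zero_le
  obtain ⟨hφs, hφK⟩ := hφnext x y (hE.1.trans (hsE x) (hys ▸ hE.1.symm (hsE y))) ⟨hys, hyK⟩
  refine ⟨hφs, hφK, hfin, ?_⟩
  rcases hKx : K x with _ | k
  · simp only [Nat.add_eq_zero_iff, one_ne_zero, and_false, ofPred_false, eSize_empty]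
    have hx0 : {x} ⊆ {y | s y = s x ∧ K y = 0} := singleton_subset_iff.2 ⟨rfl, hKx⟩
    refine lt_of_lt_of_le ?_ (eSize_mono hx0 x)
    simpa only [eSize_singleton, ENNReal.ofReal_pos] using hρ.2.1 (hE.1.refl x)
  · simp only [Nat.add_right_cancel_iff]
    exact hρ.eSize_lt_eSize (hE.1.symm (hsE x)) (hsub (· = k) x) (hsub (· = k + 1) x)
      (hblocks (s x) (hinf x hx) k).2

lemma IsCBER.exists_transversal_map (hF : IsCBER F) {B T : Set X} (hB : MeasurableSet B)
    (hT : MeasurableSet T) (hBF : EInvariant F B) (hTF : ∀ x ∈ Bᶜ, ∃! y, y ∈ T ∧ F x y) :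
    ∃ s : X → X, Measurable s ∧ (∀ x, F x (s x)) ∧ (∀ x ∈ B, s x = x) ∧
      ∀ x ∉ B, {y | s y = s x} = {y | F y x ∧ y ∉ B} := by
  obtain ⟨s, hs, hsF, hsT, hsid⟩ := hF.exists_measurable_selector
    (R := fun x y => x ∉ B ∧ y ∈ T) (by fun_prop)
  have hid : ∀ x ∈ B, s x = x := fun x hx => hsid x (.inr fun y _ h => h.1 hx)
  have hsT' : ∀ x ∉ B, s x ∈ T := fun x hx =>
    let ⟨y, hy, _⟩ := hTF x hx
    (hsT x y hy.2 ⟨hx, hy.1⟩).2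
  refine ⟨s, hs, hsF, hid, fun x hx => ext fun y => ⟨fun hy => ?_, fun ⟨hyx, hy⟩ => ?_⟩⟩
  · have hyx : F y x := hF.1.trans (hsF y) ((congr_arg (F · x) hy).mpr (hF.1.symm (hsF x)))
    exact ⟨hyx, fun hyB => hx (hBF hyx hyB)⟩
  · exact (hTF x hx).unique ⟨hsT' y hy, hF.1.trans (hF.1.symm hyx) (hsF y)⟩ ⟨hsT' x hx, hsF x⟩

lemma isFinSubequiv_of_finite_fibers (hE : Equivalence E) {s : X → X} {K : X → ℕ}
    (hs : Measurable s) (hsE : ∀ x, E x (s x)) (hK : Measurable K)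
    (hfin : ∀ x, {y | s y = s x ∧ K y = K x}.Finite) :
    IsFinSubequiv E fun x y => s x = s y ∧ K x = K y :=
  ⟨⟨fun _ => ⟨rfl, rfl⟩, fun h => ⟨h.1.symm, h.2.symm⟩,
      fun h h' => ⟨h.1.trans h'.1, h.2.trans h'.2⟩⟩,
    measurableSet_setOfPred.2 (by fun_prop),
    fun x y hxy => hE.trans (hsE x) (hxy.1 ▸ hE.symm (hsE y)),
    fun x => (hfin x).subset fun _ hy => ⟨hy.1.symm, hy.2.symm⟩⟩

open Classical in
lemma hasInjectiveQuotientCompression_of_block_shift (hE : Equivalence E) (hρ : IsCocycle E ρ)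
    {B : Set X} (hB : MeasurableSet B) (hBE : EInvariant E B) {s φ : X → X} {K : X → ℕ}
    (hs : Measurable s) (hsE : ∀ x, E x (s x)) (hsB : ∀ x ∈ B, ∀ y, s y = s x → y = x)
    (hK : Measurable K) (hφ : Measurable φ) (hφE : ∀ x, E x (φ x))
    (hφB : ∀ x ∉ B, s (φ x) = s x ∧ K (φ x) = K x + 1 ∧ {y | s y = s x ∧ K y = K x}.Finite ∧
      eSize ρ {y | s y = s x ∧ K y + 1 = K x} x < eSize ρ {y | s y = s x ∧ K y = K x} x)
    {S : X ≃ᵐ X} (hSE : ∀ x ∈ B, E x (S x))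
    (hSlt : ∀ x ∈ B, eSize ρ {y | y ∈ B ∧ S y = x} x < 1) :
    HasInjectiveQuotientCompression E ρ := by
  let F (x y : X) : Prop := s x = s y ∧ K x = K y
  have hF : IsFinSubequiv E F := isFinSubequiv_of_finite_fibers hE hs hsE hK fun x => by
    by_cases hx : x ∈ B
    exacts [(finite_singleton x).subset fun y hy => hsB x hx y hy.1, (hφB x hx).2.2.1]
  have hFB : ∀ x ∈ B, ∀ y, F x y ↔ y = x := fun x hx y =>
    ⟨fun h => hsB x hx y h.1.symm, fun h => h ▸ ⟨rfl, rfl⟩⟩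
  let ψ : X → X := B.piecewise S φ
  have hψB : ∀ x ∈ B, ψ x = S x := fun x hx => piecewise_eq_of_mem _ _ _ hx
  have hψBc : ∀ x ∉ B, ψ x = φ x := fun x hx => piecewise_eq_of_notMem _ _ _ hx
  have hψE : ∀ x, E x (ψ x) := fun x => by
    by_cases hx : x ∈ B
    exacts [hψB x hx ▸ hSE x hx, hψBc x hx ▸ hφE x]
  have hψmem : ∀ x, ψ x ∈ B ↔ x ∈ B := fun x => ⟨hBE (hE.symm (hψE x)), hBE (hψE x)⟩
  have hFmem : ∀ {x y}, F x y → (x ∈ B ↔ y ∈ B) := fun h =>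
    ⟨hBE (hF.2.2.1 h), hBE (hE.symm (hF.2.2.1 h))⟩
  refine hasInjectiveQuotientCompression_of_map (ψ := ψ) hE hF
    (S.measurable.piecewise hB hφ) (fun x y => ?_) hψE fun x => ?_
  · refine piecewise_rel_iff (fun x y => hFmem) hψmem (fun x hx y _ => ?_) (fun x hx y hy => ?_)
    · rw [hFB x hx, hFB (S x) (hBE (hSE x hx) hx), S.injective.eq_iff]
    · simp only [F, hφB x hx, hφB y hy, Nat.add_right_cancel_iff]
  · by_cases hx : x ∈ B
    · have hpre : {y | F (ψ y) x} ⊆ {y | y ∈ B ∧ S y = x} := fun y hy => by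
        have hyB : y ∈ B := (hψmem y).1 ((hFmem hy).2 hx)
        exact ⟨hyB, hψB y hyB ▸ ((hFB _ ((hψmem y).2 hyB) x).1 hy).symm⟩
      calc eSize ρ {y | F (ψ y) x} x < 1 := (eSize_mono hpre x).trans_lt (hSlt x hx)
        _ ≤ eSize ρ {y | F y x} x := hρ.one_le_eSize hE ⟨rfl, rfl⟩
    · have hpre : {y | F (ψ y) x} ⊆ {y | s y = s x ∧ K y + 1 = K x} := fun y hy => by
        have hy' : y ∉ B := fun h => hx ((hFmem hy).1 ((hψmem y).2 h))
        have hφy := hφB y hy'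
        exact ⟨hφy.1.symm.trans (hψBc y hy' ▸ hy.1), hφy.2.1.symm.trans (hψBc y hy' ▸ hy.2)⟩
      exact (eSize_mono hpre x).trans_lt (hφB x hx).2.2.2

theorem HasSmoothIncreasingDecomposition.hasInjectiveQuotientCompression (hE : IsCBER E)
    (hρ : IsCocycle E ρ) (h : HasSmoothIncreasingDecomposition E ρ) :
    HasInjectiveQuotientCompression E ρ := by
  obtain ⟨B, hB, hBE, F, hFeq, hFm, hFE, ⟨T, hT, -, hTF⟩, hinf, S, hSB, -, hSlt⟩ := h
  obtain ⟨s, hs, hsF, hsB, hsfib⟩ := (hE.of_subrelation hFeq hFm hFE).exists_transversal_map hB hT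
    (fun x y hxy => hBE (hFE hxy)) hTF
  have hsE : ∀ x, E x (s x) := fun x => hFE (hsF x)
  obtain ⟨K, φ, hK, hφ, hφE, hφB⟩ := hE.exists_block_shift (A := Bᶜ) hρ hs hsE fun x hx => by
    rw [hsfib x hx]
    exact hρ.eSize_eq_top (hsE x) (fun y hy => hFE hy.1) (hinf x hx)
  refine hasInjectiveQuotientCompression_of_block_shift hE.1 hρ hB hBE hs hsE (fun x hx y hy => ?_)
    hK hφ hφE hφB (fun x hx => hFE (hSB x hx).2) hSlt
  have hyB : y ∈ B := hBE (hE.1.symm (hsE y)) (hy ▸ hBE (hsE x) hx)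
  rwa [hsB x hx, hsB y hyB] at hy

end Blocks

namespace CountablyColorable

variable [MeasurableSpace X] {F G : X → X → Prop}

lemma anti {G' : X → X → Prop} {W : Set X} (hW : CountablyColorable G W)
    (hG : ∀ x y, G' x y → G x y) : CountablyColorable G' W := by
  obtain ⟨D, hD, hWD⟩ := hW
  exact ⟨D, fun n => ⟨(hD n).1, (hD n).2.mono' fun x y h h' => h (hG x y h')⟩, hWD⟩

lemma of_bounded_ratio {W : Set X} {u : X → ℝ} (hu : Measurable u) (hupos : ∀ x, 0 < u x)
    (hW : CountablyColorable (fun x y => G x y ∧ u x < 2 * u y ∧ u y < 2 * u x) W) :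
    CountablyColorable G W := by
  obtain ⟨D, hD, hWD⟩ := hW
  let A (p : ℤ × ℕ) : Set X := u ⁻¹' Ico (2 ^ p.1) (2 ^ (p.1 + 1)) ∩ D p.2
  refine (iUnion (W := A) fun ⟨i, m⟩ => of_pairwise ((hu measurableSet_Ico).inter (hD m).1)
    ?_).mono fun x hx => ?_
  · rintro x ⟨⟨hxi, hxi'⟩, hxD⟩ y ⟨⟨hyi, hyi'⟩, hyD⟩ hne hxy
    rw [zpow_add_one₀ two_ne_zero] at hxi' hyi'
    exact (hD m).2 hxD hyD hne ⟨hxy, by linarith, by linarith⟩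
  · obtain ⟨i, hi⟩ := exists_mem_Ico_zpow (hupos x) one_lt_two
    obtain ⟨m, hm⟩ := mem_iUnion.1 (hWD hx)
    exact mem_iUnion.2 ⟨(i, m), hi, hm⟩

variable [StandardBorelSpace X]

lemma comap {W : Set X} (hW : CountablyColorable G W) (hF : IsCBER F) {r : X → X}
    (hr : Measurable r) (hrF : ∀ x, F x (r x)) (hrW : ∀ x, r x ∈ W) :
    CountablyColorable (fun x y => G (r x) (r y)) univ := by
  obtain ⟨f, hf, -, -, hfs⟩ := hF.exists_enumeration
  obtain ⟨D, hD, hWD⟩ := hW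
  let A (p : ℕ × ℕ) : Set X := {x | f p.1 (r x) = x ∧ r x ∈ D p.2}
  refine (iUnion (W := A) fun ⟨n, m⟩ => of_pairwise ?_ ?_).mono fun x _ => ?_
  · have hDm := (hD m).1
    exact measurableSet_setOfPred.2 (by fun_prop)
  · rintro x ⟨hx, hxD⟩ y ⟨hy, hyD⟩ hne
    exact (hD m).2 hxD hyD fun h => hne (by rw [← hx, ← hy, h])
  · obtain ⟨n, hn⟩ := hfs (r x) x (hF.1.symm (hrF x))
    obtain ⟨m, hm⟩ := mem_iUnion.1 (hWD (hrW x))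
    exact mem_iUnion.2 ⟨(n, m), hn, hm⟩

lemma of_partial_transversal (hF : IsCBER F) {M : Set X} (hM : MeasurableSet M)
    (huniq : ∀ x ∈ M, ∀ y ∈ M, F x y → x = y) :
    CountablyColorable F {x | ∃ z, F x z ∧ z ∈ M} := by
  obtain ⟨f, hf, -, -, hfs⟩ := hF.exists_enumeration
  refine ⟨fun n => {x | ∃ z, F x z ∧ z ∈ M ∧ f n z = x}, fun n => ⟨?_, ?_⟩, ?_⟩
  · exact measurableSet_setOfPred.2
      (hF.measurable_exists (Q := fun x z => z ∈ M ∧ f n z = x) measurable_id (by fun_prop))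
  · rintro x ⟨z, hxz, hz, rfl⟩ y ⟨z', hyz', hz', rfl⟩ hne hxy
    rw [huniq z hz z' hz' (hF.1.trans (hF.1.symm hxz) (hF.1.trans hxy hyz'))] at hne
    exact hne rfl
  · rintro x ⟨z, hxz, hz⟩
    obtain ⟨n, hn⟩ := hfs z x (hF.1.symm hxz)
    exact mem_iUnion.2 ⟨n, z, hxz, hz, hn⟩

open TopologicalSpace in
lemma of_finite_neighbors (hF : IsCBER F) (hG : Measurable fun p : X × X => G p.1 p.2) :
    CountablyColorable (fun x y => F x y ∧ G x y) {x | {y | F x y ∧ G x y}.Finite} := by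
  let := upgradeStandardBorel X
  have := (countable_countableBasis X).to_subtype
  let D (u : countableBasis X) : Set X :=
    {x | x ∈ (u : Set X) ∧ ∀ y, F x y → G x y → y ∈ (u : Set X) → y = x}
  have hD : ∀ u, CountablyColorable (fun x y => F x y ∧ G x y) (D u) := fun u => by
    have hu : MeasurableSet (u : Set X) := (isOpen_of_mem_countableBasis u.2).measurableSet
    refine of_pairwise ((hu.inter (measurableSet_setOfPred.2 (hF.measurable_forall
      (Q := fun x y => G x y → y ∈ (u : Set X) → y = x) measurable_id (by fun_prop))))) ?_
    exact fun x hx y hy hne hxy => hne (hx.2 y hxy.1 hxy.2 hy.1).symm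
  refine (iUnion hD).mono fun x hx => ?_
  obtain ⟨u, hu, hxu, hsub⟩ := (isBasis_countableBasis X).exists_subset_of_mem_open
    (notMem_sdiff_of_mem (mem_singleton x)) (hx.subset sdiff_subset).isClosed.isOpen_compl
  refine mem_iUnion.2 ⟨⟨u, hu⟩, hxu, fun y hy hGy hyu => ?_⟩
  by_contra hne
  exact hsub hyu ⟨⟨hy, hGy⟩, hne⟩

end CountablyColorable

section ClassSup

variable {F : X → X → Prop} {τ : X → X → ℝ} {x y : X}

/-- The supremum of the masses of the points of the class of `x` when `x` has mass one. Its
finiteness is a property of the class, and it then singles out those moves inside a class which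
strictly increase the mass. -/
noncomputable def classSup (F : X → X → Prop) (τ : X → X → ℝ) (x : X) : ℝ≥0∞ :=
  ⨆ (y : X) (_ : F x y), ENNReal.ofReal (τ y x)

lemma lt_classSup_iff {c : ℝ≥0∞} :
    c < classSup F τ x ↔ ∃ y, F x y ∧ c < ENNReal.ofReal (τ y x) := by
  simp only [classSup, lt_iSup_iff, exists_prop]

variable [MeasurableSpace X]

lemma measurable_classSup [StandardBorelSpace X] (hF : IsCBER F)
    (hτ : Measurable fun p : X × X => τ p.1 p.2) : Measurable (classSup F τ) := by
  obtain ⟨f, hf, -, hfF, hfs⟩ := hF.exists_enumeration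
  have : classSup F τ = fun x => ⨆ n, ENNReal.ofReal (τ (f n x) x) := funext fun x => by
    refine le_antisymm (iSup₂_le fun y hy => ?_)
      (iSup_le fun n => le_iSup₂_of_le _ (hfF n x) le_rfl)
    obtain ⟨n, rfl⟩ := hfs x y hy
    exact le_iSup (fun n => ENNReal.ofReal (τ (f n x) x)) n
  rw [this]
  exact Measurable.iSup fun n => by fun_prop

variable (hF : Equivalence F) (hτ : IsCocycle F τ)
include hF hτ

lemma classSup_mul_ofReal (hxy : F x y) :
    classSup F τ y * ENNReal.ofReal (τ y x) = classSup F τ x := by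
  simp only [classSup, ENNReal.iSup_mul]
  refine iSup_congr fun z => ?_
  rw [show F y z ↔ F x z from ⟨hF.trans hxy, hF.trans (hF.symm hxy)⟩]
  refine iSup_congr fun hz => ?_
  rw [← ENNReal.ofReal_mul' (hτ.2.1 (hF.symm hxy)).le, ← hτ.2.2 _ (hF.symm hxy)]
  exact hF.trans (hF.symm hz) hxy

lemma classSup_eq_top (hxy : F x y) (hy : classSup F τ y = ⊤) : classSup F τ x = ⊤ := by
  rw [← classSup_mul_ofReal hF hτ hxy, hy,
    ENNReal.top_mul (ENNReal.ofReal_pos.2 (hτ.2.1 (hF.symm hxy))).ne']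

lemma classSup_le_classSup (hxy : F x y) (h : 1 ≤ τ y x) : classSup F τ y ≤ classSup F τ x := by
  rw [← classSup_mul_ofReal hF hτ hxy]
  exact le_mul_of_one_le_right' (ENNReal.one_le_ofReal.2 h)

lemma classSup_lt_classSup (hxy : F x y) (h : 1 < τ y x) (hy : classSup F τ y ≠ ⊤) :
    classSup F τ y < classSup F τ x := by
  have hpos : classSup F τ y ≠ 0 := by
    refine (lt_classSup_iff.2 ⟨y, hF.refl y, ?_⟩).ne'
    exact ENNReal.ofReal_pos.2 (hτ.2.1 (hF.refl y))
  rw [← classSup_mul_ofReal hF hτ hxy]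
  simpa using ENNReal.mul_lt_mul_right hpos hy (ENNReal.one_lt_ofReal.2 h)

end ClassSup

section Tail

variable {E : X → X → Prop} {τ : X → X → ℝ} {ψ : X → X} {x y z : X}

/-- Tail equivalence of `ψ`: the forward orbits of the two points eventually merge. -/
def TailEquiv (ψ : X → X) (x y : X) : Prop := ∃ m n : ℕ, ψ^[m] x = ψ^[n] y

lemma tailEquiv_iterate (ψ : X → X) (k : ℕ) (x : X) : TailEquiv ψ x (ψ^[k] x) := ⟨k, 0, rfl⟩

lemma tailEquiv_equivalence (ψ : X → X) : Equivalence (TailEquiv ψ) := by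
  refine ⟨fun x => ⟨0, 0, rfl⟩, fun ⟨m, n, h⟩ => ⟨n, m, h.symm⟩, ?_⟩
  rintro x y z ⟨m, n, h⟩ ⟨p, q, h'⟩
  refine ⟨p + m, n + q, ?_⟩
  rw [Function.iterate_add_apply, h, ← Function.iterate_add_apply, add_comm,
    Function.iterate_add_apply, h', ← Function.iterate_add_apply]

lemma rel_iterate (hE : Equivalence E) (hψE : ∀ x, E x (ψ x)) (k : ℕ) (x : X) :
    E x (ψ^[k] x) := by
  induction k with
  | zero => exact hE.refl x
  | succ k ih =>
    rw [Function.iterate_succ_apply']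
    exact hE.trans ih (hψE _)

lemma TailEquiv.rel (hE : Equivalence E) (hψE : ∀ x, E x (ψ x)) (h : TailEquiv ψ x y) : E x y := by
  obtain ⟨m, n, h⟩ := h
  exact hE.trans (h ▸ rel_iterate hE hψE m x) (hE.symm (rel_iterate hE hψE n y))

lemma TailEquiv.exists_iterate_eq (hinj : ψ.Injective) (h : TailEquiv ψ x y) :
    (∃ k, ψ^[k] x = y) ∨ ∃ k, ψ^[k] y = x := by
  obtain ⟨m, n, h⟩ := h
  rcases le_total m n with hmn | hmn
  · refine .inr ⟨n - m, hinj.iterate m ?_⟩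
    rw [← Function.iterate_add_apply, Nat.add_sub_cancel' hmn, h]
  · refine .inl ⟨m - n, hinj.iterate n ?_⟩
    rw [← Function.iterate_add_apply, Nat.add_sub_cancel' hmn, h]

lemma TailEquiv.eq_of_forall_iterate_notMem (hinj : ψ.Injective) {M : Set X}
    (hM : ∀ z ∈ M, ∀ k, ψ^[k + 1] z ∉ M) (hx : x ∈ M) (hy : y ∈ M) (h : TailEquiv ψ x y) :
    x = y := by
  rcases h.exists_iterate_eq hinj with ⟨_ | k, rfl⟩ | ⟨_ | k, rfl⟩
  exacts [rfl, (hM x hx k hy).elim, rfl, (hM y hy k hx).elim]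

variable [MeasurableSpace X]

lemma isCBER_tailEquiv [StandardBorelSpace X] (hψ : Measurable ψ) (hinj : ψ.Injective) :
    IsCBER (TailEquiv ψ) := by
  refine ⟨tailEquiv_equivalence ψ, measurableSet_setOfPred.2 ?_, fun x => ?_⟩
  · have := hψ.iterate
    simp only [TailEquiv]
    fun_prop
  · have hsub : {y | TailEquiv ψ x y} ⊆
        (⋃ k, {ψ^[k] x}) ∪ ⋃ k, ψ^[k] ⁻¹' {x} := fun y hy => by
      simpa [eq_comm] using hy.exists_iterate_eq hinj
    refine Countable.mono hsub (.union ?_ ?_)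
    · exact countable_iUnion fun k => countable_singleton _
    · exact countable_iUnion fun k =>
        (subsingleton_singleton.preimage (hinj.iterate k)).countable

section Monotone

variable (hτ : IsCocycle (TailEquiv ψ) τ) (h1 : ∀ x, 1 ≤ τ (ψ x) x)
include hτ h1

lemma one_le_iterate (k : ℕ) (x : X) : 1 ≤ τ (ψ^[k] x) x := by
  have hT := tailEquiv_equivalence ψ
  induction k with
  | zero => exact (hτ.apply_self hT x).ge
  | succ k ih =>
    have hstep : TailEquiv ψ (ψ (ψ^[k] x)) (ψ^[k] x) := hT.symm (tailEquiv_iterate ψ 1 _)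
    rw [Function.iterate_succ_apply', hτ.2.2 hstep (hT.symm (tailEquiv_iterate ψ k x))]
    exact one_le_mul_of_one_le_of_one_le (h1 _) ih

lemma iterate_ne_of_one_lt (hxy : TailEquiv ψ x y) (h : 1 < τ y x) (k : ℕ) : ψ^[k] y ≠ x := by
  rintro rfl
  have hmul := hτ.mul_symm (tailEquiv_equivalence ψ) hxy
  exact (one_lt_mul_of_le_of_lt (one_le_iterate hτ h1 k y) h).ne' hmul

lemma exists_iterate_eq_of_one_lt (hinj : ψ.Injective) (hxy : TailEquiv ψ x y) (h : 1 < τ y x) :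
    ∃ k, ψ^[k] x = y :=
  (hxy.exists_iterate_eq hinj).resolve_right fun ⟨k, hk⟩ => iterate_ne_of_one_lt hτ h1 hxy h k hk

lemma finite_window_of_classSup_eq_top (hinj : ψ.Injective) {a b : ℝ} (ha : 0 < a)
    (hup : classSup (TailEquiv ψ) τ x = ⊤)
    (hdown : classSup (TailEquiv ψ) (fun x y => τ y x) x = ⊤) :
    {y | TailEquiv ψ x y ∧ τ x y ∈ Ioo a b}.Finite := by
  have hT := tailEquiv_equivalence ψ
  obtain ⟨w, hxw, hw⟩ := lt_classSup_iff.1 (hup ▸ ENNReal.ofReal_lt_top (r := a⁻¹))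
  obtain ⟨v, hxv, hv⟩ := lt_classSup_iff.1 (hdown ▸ ENNReal.ofReal_lt_top (r := b))
  replace hw := ENNReal.ofReal_lt_ofReal_iff'.1 hw |>.1
  replace hv := ENNReal.ofReal_lt_ofReal_iff'.1 hv |>.1
  have hyw : ∀ y, TailEquiv ψ x y → τ x y ∈ Ioo a b → 1 < τ w y := fun y hy hyab => by
    rw [hτ.2.2 (hT.symm hxw) hy, ← inv_mul_cancel₀ ha.ne']
    exact mul_lt_mul'' hw hyab.1 (inv_nonneg.2 ha.le) ha.le
  have hvy : ∀ y, TailEquiv ψ x y → τ x y ∈ Ioo a b → 1 < τ y v := fun y hy hyab => by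
    rw [hτ.2.2 hy (hT.trans (hT.symm hy) hxv)] at hv
    exact (lt_mul_iff_one_lt_right (hτ.2.1 hy)).1 (hyab.2.trans hv)
  have hfrom : ∀ y, TailEquiv ψ x y → τ x y ∈ Ioo a b → ∃ j, ψ^[j] v = y := fun y hy hyab =>
    exists_iterate_eq_of_one_lt hτ h1 hinj (hT.trans (hT.symm hxv) hy) (hvy y hy hyab)
  rcases eq_empty_or_nonempty {y | TailEquiv ψ x y ∧ τ x y ∈ Ioo a b} with h | ⟨y₀, hy₀, hy₀ab⟩
  · exact h ▸ finite_empty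
  obtain ⟨i, rfl⟩ := hfrom y₀ hy₀ hy₀ab
  obtain ⟨k, rfl⟩ := exists_iterate_eq_of_one_lt hτ h1 hinj (hT.trans (hT.symm hy₀) hxw)
    (hyw _ hy₀ hy₀ab)
  refine ((finite_Iic (k + i)).image fun j => ψ^[j] v).subset fun y ⟨hy, hyab⟩ => ?_
  obtain ⟨j, rfl⟩ := hfrom y hy hyab
  refine ⟨j, mem_Iic.2 (not_lt.1 fun hj => ?_), rfl⟩
  refine iterate_ne_of_one_lt hτ h1 (hT.trans (hT.symm hy) hxw) (hyw _ hy hyab) (j - (k + i)) ?_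
  rw [← Function.iterate_add_apply ψ k, ← Function.iterate_add_apply, Nat.sub_add_cancel hj.le]

end Monotone

/-- The points where a mass-nondecreasing injection `ψ` fails to be a mass-preserving bijection:
those outside of its range, and those whose mass it strictly increases. -/
def IsDefect (τ : X → X → ℝ) (ψ : X → X) (z : X) : Prop := z ∉ range ψ ∨ 1 < τ (ψ z) z

lemma iterate_injective_of_isDefect (hτ : IsCocycle (TailEquiv ψ) τ) (h1 : ∀ x, 1 ≤ τ (ψ x) x)
    (hinj : ψ.Injective) (hxz : TailEquiv ψ x z) (hz : IsDefect τ ψ z) :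
    Function.Injective fun k => ψ^[k] x := by
  refine Function.Injective.of_lt_imp_ne fun i j hij h => ?_
  obtain ⟨p, rfl⟩ := Nat.exists_eq_add_of_lt hij
  obtain ⟨m, n, hmn⟩ := hxz
  have hx : Function.IsPeriodicPt ψ (p + 1) x := by
    have := Function.iterate_cancel hinj h.symm
    rwa [add_assoc, Nat.add_sub_cancel_left] at this
  have hzp : ψ^[p + 1] z = z := by
    have := hmn ▸ hx.apply_iterate m
    refine hinj.iterate n ?_
    rw [← Function.iterate_add_apply, add_comm, Function.iterate_add_apply, this]
  rcases hz with hz | hz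
  · exact hz ⟨ψ^[p] z, (Function.iterate_succ_apply' ψ p z).symm.trans hzp⟩
  · exact iterate_ne_of_one_lt hτ h1 (tailEquiv_iterate ψ 1 z) hz p hzp

variable [StandardBorelSpace X] (hψ : Measurable ψ) (hinj : ψ.Injective)
include hψ hinj

lemma measurable_isDefect (hτ : Measurable fun p : X × X => τ p.1 p.2) :
    Measurable fun z => IsDefect τ ψ z := by
  have hrange := (hψ.measurableEmbedding hinj).measurableSet_range
  simp only [IsDefect]
  fun_prop

lemma countablyColorable_of_range_compl :
    CountablyColorable (TailEquiv ψ) {x | ∃ z, TailEquiv ψ x z ∧ z ∈ (range ψ)ᶜ} := by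
  refine .of_partial_transversal (isCBER_tailEquiv hψ hinj)
    (hψ.measurableEmbedding hinj).measurableSet_range.compl
    fun x hx y hy => TailEquiv.eq_of_forall_iterate_notMem hinj (fun z _ k => ?_) hx hy
  rw [Function.iterate_succ_apply']
  exact notMem_compl_iff.2 (mem_range_self _)

lemma countablyColorable_of_decrease {h : X → ℝ≥0∞} (hh : Measurable h)
    (hle : ∀ x, h (ψ x) ≤ h x) :
    CountablyColorable (TailEquiv ψ) {x | ∃ z, TailEquiv ψ x z ∧ h (ψ z) < h z} := by
  let M (q : ℚ) : Set X := {z | h (ψ z) < Real.toNNReal q ∧ Real.toNNReal q < h z}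
  have hanti : ∀ x, Antitone fun k => h (ψ^[k] x) := fun x => antitone_nat_of_succ_le fun k => by
    rw [Function.iterate_succ_apply']
    exact hle _
  have hM : ∀ q, CountablyColorable (TailEquiv ψ) {x | ∃ z, TailEquiv ψ x z ∧ z ∈ M q} := fun q =>
    .of_partial_transversal (isCBER_tailEquiv hψ hinj) (measurableSet_setOfPred.2 (by fun_prop))
      fun x hx y hy => TailEquiv.eq_of_forall_iterate_notMem hinj
        (fun z hz k hz' => (hz'.2.trans_le (hanti (ψ z) k.zero_le)).not_gt hz.1) hx hy
  refine (CountablyColorable.iUnion hM).mono fun x ⟨z, hxz, hz⟩ => ?_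
  obtain ⟨q, -, hq⟩ := ENNReal.lt_iff_exists_rat_btwn.1 hz
  exact mem_iUnion.2 ⟨q, z, hxz, hq⟩

lemma countablyColorable_of_isDefect (hτ : IsCocycle (TailEquiv ψ) τ) (h1 : ∀ x, 1 ≤ τ (ψ x) x)
    {a b : ℝ} (ha : 0 < a) :
    CountablyColorable (fun x y => TailEquiv ψ x y ∧ τ x y ∈ Ioo a b)
      {x | ∃ z, TailEquiv ψ x z ∧ IsDefect τ ψ z} := by
  have hT := isCBER_tailEquiv hψ hinj
  have hψT : ∀ x, TailEquiv ψ x (ψ x) := tailEquiv_iterate ψ 1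
  have hτ' := hτ.swap hT.1
  let up := classSup (TailEquiv ψ) τ
  let down := classSup (TailEquiv ψ) fun x y => τ y x
  have hrange := countablyColorable_of_range_compl hψ hinj
  have hup := countablyColorable_of_decrease hψ hinj (h := up) (measurable_classSup hT hτ.1)
    fun x => classSup_le_classSup hT.1 hτ (hψT x) (h1 x)
  have hdown := countablyColorable_of_decrease hψ hinj (h := down⁻¹)
    (measurable_classSup hT hτ'.1).inv fun x =>
      ENNReal.inv_le_inv.2 (classSup_le_classSup hT.1 hτ' (hT.1.symm (hψT x)) (h1 x))
  have hfin := CountablyColorable.of_finite_neighbors hT (G := fun x y => τ x y ∈ Ioo a b)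
    (measurableSet_setOfPred.1 (hτ.1 measurableSet_Ioo))
  refine (((hrange.union (hup.union hdown)).anti fun _ _ => And.left).union hfin).mono ?_
  rintro x ⟨z, hxz, hz | hz⟩
  · exact .inl (.inl ⟨z, hxz, hz⟩)
  by_cases hupz : up (ψ z) = ⊤
  · by_cases hdownz : down z = ⊤
    · exact .inr (finite_window_of_classSup_eq_top hτ h1 hinj ha
        (classSup_eq_top hT.1 hτ (hT.1.trans hxz (hψT z)) hupz)
        (classSup_eq_top hT.1 hτ' hxz hdownz))
    · exact .inl (.inr (.inr ⟨z, hxz, ENNReal.inv_lt_inv.2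
        (classSup_lt_classSup hT.1 hτ' (hT.1.symm (hψT z)) hz hdownz)⟩))
  · exact .inl (.inr (.inl ⟨z, hxz, classSup_lt_classSup hT.1 hτ (hψT z) hz hupz⟩))

end Tail

section Quotient

variable {E F : X → X → Prop} {ρ : X → X → ℝ} {s ψ : X → X} {x x' y y' : X}

/-- The `ρ`-size of the `F`-class of `x` relative to `x`, for `F` with finite classes. -/
noncomputable def classSize (F : X → X → Prop) (ρ : X → X → ℝ) (x : X) : ℝ :=
  (eSize ρ {y | F y x} x).toReal

/-- The quotient cocycle `ρ / F`, pulled back to `X`. -/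
noncomputable def quotientCocycle (F : X → X → Prop) (ρ : X → X → ℝ) (x y : X) : ℝ :=
  classSize F ρ x * ρ x y / classSize F ρ y

lemma eSize_eq_top_of_pairwiseDisjoint {A : ℕ → Set X} (hA : univ.PairwiseDisjoint A) {B : Set X}
    (hAB : ∀ k, A k ⊆ B) {c : ℝ≥0∞} (hc : c ≠ 0) (hcA : ∀ k, c ≤ eSize ρ (A k) x) :
    eSize ρ B x = ⊤ :=
  top_le_iff.1 <| calc
    ⊤ = ∑' _ : ℕ, c := (ENNReal.tsum_const_eq_top_of_ne_zero hc).symm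
    _ ≤ ∑' k, eSize ρ (A k) x := ENNReal.tsum_le_tsum hcA
    _ = eSize ρ (⋃ k, A k) x :=
      (ENNReal.tsum_biUnion (f := fun y => ENNReal.ofReal (ρ y x)) hA).symm
    _ ≤ eSize ρ B x := eSize_mono (iUnion_subset hAB) x

/-- The union of the `ψ`-orbits that meet the defects of `ψ` for the quotient cocycle. -/
def defectiveOrbits (F : X → X → Prop) (ρ : X → X → ℝ) (ψ : X → X) : Set X :=
  {x | ∃ z, TailEquiv ψ x z ∧ IsDefect (quotientCocycle F ρ) ψ z}

lemma mem_defectiveOrbits_iff (hxy : TailEquiv ψ x y) :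
    x ∈ defectiveOrbits F ρ ψ ↔ y ∈ defectiveOrbits F ρ ψ := by
  have hT := tailEquiv_equivalence ψ
  exact exists_congr fun z => and_congr_left' ⟨hT.trans (hT.symm hxy), hT.trans hxy⟩

variable [MeasurableSpace X]

lemma IsCocycle.inv_apply (hρ : IsCocycle E ρ) (hE : Equivalence E) (hxy : E x y) :
    (ρ x y)⁻¹ = ρ y x :=
  inv_eq_of_mul_eq_one_right (hρ.mul_symm hE hxy)

lemma IsCocycle.quotientCocycle_eq_div (hρ : IsCocycle E ρ) (hE : Equivalence E) (hx : E x' x)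
    (hxy : E x y) (hy : E y' y) :
    quotientCocycle F ρ x' y' =
      ρ x' x * classSize F ρ x' * ρ x y / (ρ y' y * classSize F ρ y') := by
  rw [quotientCocycle, hρ.2.2 (hE.trans hx hxy) (hE.symm hy), hρ.2.2 hx hxy,
    ← hρ.inv_apply hE hy]
  field_simp

namespace IsFinSubequiv

lemma finite_class (hF : IsFinSubequiv E F) (x : X) : {y | F y x}.Finite :=
  (hF.2.2.2 x).subset fun _ hy => hF.1.symm hy

lemma eSize_class (hF : IsFinSubequiv E F) (hρ : IsCocycle E ρ) (hxy : E x y) :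
    eSize ρ {z | F z x} y = ENNReal.ofReal (classSize F ρ x * ρ x y) := by
  rw [← hρ.eSize_mul_ofReal hxy (A := {z | F z x}) fun z hz => hF.2.2.1 hz, classSize,
    ENNReal.ofReal_mul ENNReal.toReal_nonneg,
    ENNReal.ofReal_toReal (eSize_ne_top_of_finite (hF.finite_class x) x)]

section ClassSize

variable (hF : IsFinSubequiv E F) (hE : Equivalence E) (hρ : IsCocycle E ρ)
include hF hE hρ

lemma classSize_pos (x : X) : 0 < classSize F ρ x := by
  have hself : {x} ⊆ {y | F y x} := singleton_subset_iff.2 (hF.1.refl x)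
  refine ENNReal.toReal_pos (ne_of_gt ?_) (eSize_ne_top_of_finite (hF.finite_class x) x)
  calc (0 : ℝ≥0∞) < eSize ρ {x} x := by simp [eSize_singleton, hρ.apply_self hE]
    _ ≤ eSize ρ {y | F y x} x := eSize_mono hself x

lemma relSize_class (hxy : E x y) :
    relSize ρ {z | F z x} {z | F z y} y = ENNReal.ofReal (quotientCocycle F ρ x y) := by
  rw [relSize, hF.eSize_class hρ hxy, hF.eSize_class hρ (hE.refl y), hρ.apply_self hE,
    mul_one, ← ENNReal.ofReal_div_of_pos (hF.classSize_pos hE hρ y), quotientCocycle]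

lemma quotientCocycle_eq_one (hxy : F x y) : quotientCocycle F ρ x y = 1 := by
  have hclass : {z | F z x} = {z | F z y} :=
    ext fun z => ⟨fun h => hF.1.trans h hxy, fun h => hF.1.trans h (hF.1.symm hxy)⟩
  have hsize := hF.eSize_class hρ (hF.2.2.1 hxy)
  rw [quotientCocycle, div_eq_one_iff_eq (hF.classSize_pos hE hρ y).ne', classSize, classSize,
    ← hclass, hsize, ENNReal.toReal_ofReal]
  · rfl
  · exact (mul_pos (hF.classSize_pos hE hρ x) (hρ.2.1 (hF.2.2.1 hxy))).le

lemma relSize_preimage {φ : Quotient (Setoid.mk F hF.1) → Quotient (Setoid.mk F hF.1)}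
    (hinj : φ.Injective) (hxx' : E x x') (hφ : φ (.mk _ x) = .mk _ x')
    (hx'y : F x' y) :
    relSize ρ {z | z ∈ univ ∧ φ (.mk _ z) = .mk _ y} {z | F z y} y =
      ENNReal.ofReal (quotientCocycle F ρ x y) := by
  have hmk : ∀ {x y : X}, Quotient.mk (Setoid.mk F hF.1) x = .mk _ y ↔ F x y := Quotient.eq
  rw [← hF.relSize_class hE hρ (hE.trans hxx' (hF.2.2.1 hx'y)), ← hmk.2 hx'y, ← hφ]
  simp only [mem_univ, true_and, hinj.eq_iff, hmk]

end ClassSize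

lemma isCBER (hF : IsFinSubequiv E F) : IsCBER F :=
  ⟨hF.1, hF.2.1, fun x => (hF.2.2.2 x).countable⟩

variable [StandardBorelSpace X]

lemma measurable_classSize (hF : IsFinSubequiv E F) (hρ : Measurable fun p : X × X => ρ p.1 p.2) :
    Measurable (classSize F ρ) := by
  have hclass : ∀ x, {y | F y x} = {y | F x y ∧ True} := fun x =>
    ext fun y => ⟨fun h => ⟨hF.1.symm h, trivial⟩, fun h => hF.1.symm h.1⟩
  simp only [funext (classSize.eq_1 F ρ), hclass]
  exact (hF.isCBER.measurable_eSize hρ measurable_id measurable_id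
    measurable_const).ennreal_toReal

lemma isCocycle_quotientCocycle (hF : IsFinSubequiv E F) (hE : Equivalence E)
    (hρ : IsCocycle E ρ) : IsCocycle E (quotientCocycle F ρ) := by
  have hpos := hF.classSize_pos hE hρ
  have hm := hF.measurable_classSize hρ.1
  have hρm := hρ.1
  refine ⟨by unfold quotientCocycle; fun_prop, fun x y hxy => ?_, fun x y z hxy hyz => ?_⟩
  · exact div_pos (mul_pos (hpos x) (hρ.2.1 hxy)) (hpos y)
  · have := (hpos y).ne'
    simp only [quotientCocycle, hρ.2.2 hxy hyz]
    field_simp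

lemma exists_measurable_section (hF : IsFinSubequiv E F) :
    ∃ s : X → X, Measurable s ∧ (∀ x, F x (s x)) ∧ ∀ x y, F x y → s x = s y := by
  obtain ⟨e, he⟩ := exists_measurableEmbedding_real X
  have hem := he.measurable
  obtain ⟨s, hs, hsF, hsR, -⟩ := hF.isCBER.exists_measurable_selector
    (R := fun x y => ∀ z, F x z → e y ≤ e z) (hF.isCBER.measurable_forall
      (Q := fun p z => e p.2 ≤ e z) measurable_fst (by fun_prop))
  have hmin : ∀ x z, F x z → e (s x) ≤ e z := fun x => by
    obtain ⟨y, hxy, hy⟩ := exists_min_image {y | F x y} e (hF.2.2.2 x) ⟨x, hF.1.refl x⟩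
    exact hsR x y hxy hy
  have hle : ∀ x y, F x y → e (s x) ≤ e (s y) := fun x y hxy =>
    hmin x _ (hF.1.trans hxy (hsF y))
  exact ⟨s, hs, hsF, fun x y hxy =>
    he.injective ((hle x y hxy).antisymm (hle y x (hF.1.symm hxy)))⟩

end IsFinSubequiv

/-- `ψ` is a point map representing an injective compression of `ρ / F`: it moves the
representatives of the `F`-classes chosen by `s` the way the compression moves the classes, and
fixes all other points. -/
structure IsCompressionLift (E F : X → X → Prop) (ρ : X → X → ℝ) (s ψ : X → X) : Prop where
  isFinSubequiv : IsFinSubequiv E F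
  measurable_section : Measurable s
  rel_section : ∀ x, F x (s x)
  section_eq : ∀ x y, F x y → s x = s y
  measurable : Measurable ψ
  injective : ψ.Injective
  rel : ∀ x, E x (ψ x)
  section_apply : ∀ x, s x = x → s (ψ x) = ψ x
  one_le : ∀ x, 1 ≤ quotientCocycle F ρ (ψ x) x
  exists_isDefect : ∀ x, ∃ z, E x z ∧ s z = z ∧ IsDefect (quotientCocycle F ρ) ψ z

variable [StandardBorelSpace X]

open Classical in
lemma exists_measurable_lift {S : Setoid X} (hs : Measurable s) (hsS : ∀ x, S x (s x))
    (hsS' : ∀ x y, S x y → s x = s y) {φ : Quotient S → Quotient S} (hφ : Measurable φ)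
    (hinj : φ.Injective) :
    ∃ ψ : X → X, Measurable ψ ∧ ψ.Injective ∧ (∀ x, s x ≠ x → ψ x = x) ∧
      (∀ x, s (ψ x) = ψ x ↔ s x = x) ∧
      ∀ x, s x = x → φ (Quotient.mk S x) = Quotient.mk S (ψ x) := by
  let lift : Quotient S → X := Quotient.lift s hsS'
  have hlift : ∀ q, s (lift q) = lift q ∧ Quotient.mk S (lift q) = q :=
    Quotient.ind fun x => ⟨(hsS' _ _ (hsS x)).symm, Quotient.sound (S.symm (hsS x))⟩
  let ψ (x : X) : X := if s x = x then lift (φ (Quotient.mk S x)) else x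
  have hψ₀ : ∀ x, s x = x → ψ x = lift (φ (Quotient.mk S x)) := fun x hx => if_pos hx
  have hψ₁ : ∀ x, s x ≠ x → ψ x = x := fun x hx => if_neg hx
  have hψs : ∀ x, s (ψ x) = ψ x ↔ s x = x := fun x =>
    ⟨fun h => by_contra fun hx => hx (hψ₁ x hx ▸ h), fun hx => hψ₀ x hx ▸ (hlift _).1⟩
  have hψφ : ∀ x, s x = x → φ (Quotient.mk S x) = Quotient.mk S (ψ x) := fun x hx =>
    hψ₀ x hx ▸ (hlift _).2.symm
  refine ⟨ψ, ?_, fun x y hxy => ?_, hψ₁, hψs, hψφ⟩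
  · have hliftm : Measurable lift := measurable_from_quotient.2 hs
    exact .ite (measurableSet_eq_fun hs measurable_id)
      (hliftm.comp (hφ.comp measurable_quotient_mk')) measurable_id
  · by_cases hx : s x = x
    · have hy := (hψs y).1 (hxy ▸ (hψs x).2 hx)
      have hS : S x y := Quotient.exact (hinj (by rw [hψφ x hx, hψφ y hy, hxy]))
      rw [← hx, ← hy, hsS' x y hS]
    · have hy : s y ≠ y := fun hy => hx ((hψs x).1 (hxy ▸ (hψs y).2 hy))
      rwa [hψ₁ x hx, hψ₁ y hy] at hxy

lemma HasInjectiveQuotientCompression.exists_isCompressionLift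
    (hE : Equivalence E) (hρ : IsCocycle E ρ) (h : HasInjectiveQuotientCompression E ρ) :
    ∃ F s ψ, IsCompressionLift E F ρ s ψ := by
  obtain ⟨F, hFeq, hF, φ, hφ, hinj, hφE, hφle, hφlt⟩ := h
  obtain ⟨s, hs, hsF, hsF'⟩ := hF.exists_measurable_section
  obtain ⟨ψ, hψ, hψinj, hψid, hψs, hψφ⟩ := exists_measurable_lift hs hsF hsF' hφ hinj
  have hψE : ∀ x, E x (ψ x) := fun x => by
    by_cases hx : s x = x
    · exact (hφE (mem_univ x) _ (hψφ x hx)).1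
    · exact (hψid x hx).symm ▸ hE.refl x
  have hq := hF.isCocycle_quotientCocycle hE hρ
  refine ⟨F, s, ψ, hF, hs, hsF, hsF', hψ, hψinj, hψE, fun x => (hψs x).2, fun x => ?_,
    fun x => ?_⟩
  · by_cases hx : s x = x
    · rw [← hq.inv_apply hE (hψE x), one_le_inv₀ (hq.2.1 (hψE x)), ← ENNReal.ofReal_le_one,
        ← hF.relSize_preimage hE hρ hinj (hψE x) (hψφ x hx) (hF.1.refl _)]
      exact hφle (mem_univ _)
    · rw [hψid x hx, hq.apply_self hE]
  · obtain ⟨y, -, hxy, hlt⟩ := hφlt (mem_univ x)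
    have hEsy : E x (s y) := hE.trans hxy (hF.2.2.1 (hsF y))
    have hss : s (s y) = s y := (hsF' _ _ (hsF y)).symm
    by_cases hy : s y ∈ range ψ
    · obtain ⟨u, hu⟩ := hy
      have hus : s u = u := (hψs u).1 (hu ▸ hss)
      have huy : F (ψ u) y := hu ▸ hF.1.symm (hsF y)
      have hquy : quotientCocycle F ρ u y = quotientCocycle F ρ u (ψ u) := by
        rw [hq.2.2 (hψE u) (hF.2.2.1 huy), hF.quotientCocycle_eq_one hE hρ huy, mul_one]
      refine ⟨u, hE.trans (hu ▸ hEsy) (hE.symm (hψE u)), hus, .inr ?_⟩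
      rw [← hq.inv_apply hE (hψE u), one_lt_inv₀ (hq.2.1 (hψE u)), ← hquy,
        ← ENNReal.ofReal_lt_one, ← hF.relSize_preimage hE hρ hinj (hψE u) (hψφ u hus) huy]
      exact hlt
    · exact ⟨s y, hEsy, hss, .inl hy⟩

namespace IsCompressionLift

variable {r : X → X} (hL : IsCompressionLift E F ρ s ψ) (hE : IsCBER E) (hρ : IsCocycle E ρ)
include hL hE hρ

lemma isCocycle_tailEquiv : IsCocycle (TailEquiv ψ) (quotientCocycle F ρ) :=
  (hL.isFinSubequiv.isCocycle_quotientCocycle hE.1 hρ).mono fun _ _ => TailEquiv.rel hE.1 hL.rel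

lemma exists_retraction :
    ∃ r : X → X, Measurable r ∧ (∀ x, E x (r x)) ∧ (∀ x, s (r x) = r x) ∧
      (∀ x, r x ∈ defectiveOrbits F ρ ψ) ∧ ∀ x, s x ∈ defectiveOrbits F ρ ψ → r x = s x := by
  have hs := hL.measurable_section
  have hEs : ∀ x, E x (s x) := fun x => hL.isFinSubequiv.2.2.1 (hL.rel_section x)
  have hD : Measurable fun x => x ∈ defectiveOrbits F ρ ψ :=
    (isCBER_tailEquiv hL.measurable hL.injective).measurable_exists measurable_id
      (Q := fun _ z => IsDefect (quotientCocycle F ρ) ψ z)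
      ((measurable_isDefect hL.measurable hL.injective (hL.isCocycle_tailEquiv hE hρ).1).comp
        measurable_snd)
  obtain ⟨r, hr, hrE, hrD, hrid⟩ := hE.exists_measurable_selector
    (R := fun _ y => s y ∈ defectiveOrbits F ρ ψ) (hD.comp (hs.comp measurable_snd))
  refine ⟨s ∘ r, hs.comp hr, fun x => hE.1.trans (hrE x) (hEs _),
    fun x => (hL.section_eq _ _ (hL.rel_section _)).symm, fun x => ?_,
    fun x hx => congr_arg s (hrid x (.inl hx))⟩
  obtain ⟨z, hxz, hsz, hz⟩ := hL.exists_isDefect x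
  exact hrD x z hxz (hsz.symm ▸ ⟨z, (tailEquiv_equivalence ψ).refl z, hz⟩)

lemma eSize_comap_tailEquiv_eq_top (hrE : ∀ x, E x (r x)) (hsr : ∀ x, s (r x) = r x)
    (hrD : ∀ x, r x ∈ defectiveOrbits F ρ ψ)
    (hrs : ∀ x, s x ∈ defectiveOrbits F ρ ψ → r x = s x) (x : X) :
    eSize ρ {y | TailEquiv ψ (r y) (r x)} x = ⊤ := by
  have hT := tailEquiv_equivalence ψ
  have hτ := hL.isCocycle_tailEquiv hE hρ
  have hF := hL.isFinSubequiv
  let v (k : ℕ) : X := ψ^[k] (r x)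
  have hv : ∀ k, TailEquiv ψ (r x) (v k) := fun k => tailEquiv_iterate ψ k (r x)
  have hvE : ∀ k, E (v k) (r x) := fun k => (hT.symm (hv k)).rel hE.1 hL.rel
  have hsv : ∀ k, s (v k) = v k := fun k => by
    induction k with
    | zero => exact hsr x
    | succ k ih => simpa only [v, Function.iterate_succ_apply'] using hL.section_apply _ ih
  have hs : ∀ k y, F y (v k) → s y = v k := fun k y hy => (hL.section_eq _ _ hy).trans (hsv k)
  have hrx : E (r x) x := hE.1.symm (hrE x)
  have hpos : 0 < classSize F ρ (r x) * ρ (r x) x :=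
    mul_pos (hF.classSize_pos hE.1 hρ _) (hρ.2.1 hrx)
  refine eSize_eq_top_of_pairwiseDisjoint (A := fun k => {y | F y (v k)})
    (fun i _ j _ hij => disjoint_left.2 fun y hi hj => hij ?_) (fun k y hy => ?_)
    (ENNReal.ofReal_pos.2 hpos).ne' fun k => ?_
  · obtain ⟨z, hz, hzD⟩ := hrD x
    exact iterate_injective_of_isDefect hτ hL.one_le hL.injective hz hzD
      ((hs i y hi).symm.trans (hs j y hj))
  · have hry : r y = v k :=
      (hrs y (hs k y hy ▸ (mem_defectiveOrbits_iff (hv k)).1 (hrD x))).trans (hs k y hy)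
    rw [mem_ofPred_eq, hry]
    exact hT.symm (hv k)
  · have hone := one_le_iterate hτ hL.one_le k (r x)
    rw [quotientCocycle, one_le_div (hF.classSize_pos hE.1 hρ _)] at hone
    rw [hF.eSize_class hρ (hE.1.trans (hvE k) hrx), hρ.2.2 (hvE k) hrx, ← mul_assoc]
    exact ENNReal.ofReal_le_ofReal (mul_le_mul_of_nonneg_right hone (hρ.2.1 hrx).le)

lemma smooth_comap_tailEquiv (hr : Measurable r) (hrE : ∀ x, E x (r x))
    (hrD : ∀ x, r x ∈ defectiveOrbits F ρ ψ) : Smooth (fun x y => TailEquiv ψ (r x) (r y)) ρ := by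
  have hD := countablyColorable_of_isDefect (b := 4) hL.measurable hL.injective
    (hL.isCocycle_tailEquiv hE hρ) hL.one_le (by norm_num : (0 : ℝ) < 1 / 4)
  have hrx : ∀ x, E (r x) x := fun x => hE.1.symm (hrE x)
  have hρm := hρ.1
  have hsize := hL.isFinSubequiv.measurable_classSize hρ.1
  let u (x : X) : ℝ := ρ (r x) x * classSize F ρ (r x)
  have hu : Measurable u := by fun_prop
  have hupos : ∀ x, 0 < u x := fun x =>
    mul_pos (hρ.2.1 (hrx x)) (hL.isFinSubequiv.classSize_pos hE.1 hρ _)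
  have hcol : CountablyColorable
      (fun x y => TailEquiv ψ (r x) (r y) ∧ ρ x y ∈ Ioo (1 / 2 : ℝ) 2) univ := by
    refine .of_bounded_ratio hu hupos ((hD.comap hE hr hrE hrD).anti ?_)
    rintro x y ⟨⟨hxy, hlo, hhi⟩, hux, huy⟩
    have hExy : E x y := hE.1.trans (hrE x) (hE.1.trans (hxy.rel hE.1 hL.rel) (hrx y))
    have hq : quotientCocycle F ρ (r x) (r y) = u x * ρ x y / u y :=
      hρ.quotientCocycle_eq_div hE.1 (hrx x) hExy (hrx y)
    refine ⟨hxy, ?_⟩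
    rw [hq, mem_Ioo, lt_div_iff₀ (hupos y), div_lt_iff₀ (hupos y)]
    constructor <;> nlinarith [hupos x]
  obtain ⟨c, hc, hcc⟩ := hcol.exists_measurable_coloring
  exact ⟨Ioo (1 / 2) 2, isOpen_Ioo, by norm_num, fun a ha => mem_Ioi.2 (by linarith [ha.1]),
    c, hc, fun x y _ _ hne hxy hρxy => hcc x y hne ⟨hxy, hρxy⟩⟩

end IsCompressionLift

theorem HasInjectiveQuotientCompression.hasAperiodicSmoothSubrelation (hE : IsCBER E)
    (hρ : IsCocycle E ρ) (h : HasInjectiveQuotientCompression E ρ) :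
    HasAperiodicSmoothSubrelation E ρ := by
  obtain ⟨F, s, ψ, hL⟩ := h.exists_isCompressionLift hE.1 hρ
  obtain ⟨r, hr, hrE, hsr, hrD, hrs⟩ := hL.exists_retraction hE hρ
  obtain ⟨hcber, hsub⟩ := (isCBER_tailEquiv hL.measurable hL.injective).comap hE
    (fun _ _ => TailEquiv.rel hE.1 hL.rel) hr hrE
  exact ⟨fun x y => TailEquiv ψ (r x) (r y), hcber.1, hcber.2.1, hsub,
    hL.eSize_comap_tailEquiv_eq_top hE hρ hrE hsr hrD hrs,
    hL.smooth_comap_tailEquiv hE hρ hr hrE hrD⟩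

end Quotient

/-- Characterization of the existence of an injective Borel compression of the quotient of
`ρ` by a finite Borel subequivalence relation of `E`: (1) ↔ (2) ↔ (3). -/
theorem stmt4 [MeasurableSpace X] [StandardBorelSpace X]
    (E : X → X → Prop) (hE : IsCBER E)
    (ρ : X → X → ℝ) (hρ : IsCocycle E ρ) :
    ((∃ (F : X → X → Prop) (hF : Equivalence F), IsFinSubequiv E F ∧
        ∃ φ : Quotient (Setoid.mk F hF) → Quotient (Setoid.mk F hF),
          Measurable φ ∧ Function.Injective φ ∧
          QuotCompressionOn E ρ Set.univ (Setoid.mk F hF) φ) ↔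
      (∃ F : X → X → Prop, Equivalence F ∧ MeasurableSet {p : X × X | F p.1 p.2} ∧
        (∀ ⦃x y : X⦄, F x y → E x y) ∧
        (∀ x : X, eSize ρ {y | F y x} x = ⊤) ∧ Smooth F ρ)) ∧
    ((∃ F : X → X → Prop, Equivalence F ∧ MeasurableSet {p : X × X | F p.1 p.2} ∧
        (∀ ⦃x y : X⦄, F x y → E x y) ∧
        (∀ x : X, eSize ρ {y | F y x} x = ⊤) ∧ Smooth F ρ) ↔
      (∃ B : Set X, MeasurableSet B ∧ EInvariant E B ∧
        ∃ F : X → X → Prop, Equivalence F ∧ MeasurableSet {p : X × X | F p.1 p.2} ∧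
          (∀ ⦃x y : X⦄, F x y → E x y) ∧
          (∃ T : Set X, MeasurableSet T ∧ T ⊆ Bᶜ ∧ ∀ x ∈ Bᶜ, ∃! y, y ∈ T ∧ F x y) ∧
          (∀ x ∉ B, eSize ρ {y | F y x ∧ y ∉ B} x = ⊤) ∧
          (∃ T : X ≃ᵐ X, (∀ x ∈ B, T x ∈ B ∧ F x (T x)) ∧ (∀ x ∈ B, T.symm x ∈ B) ∧
            ∀ x ∈ B, eSize ρ {y | y ∈ B ∧ T y = x} x < 1))) := by
  have h₁₂ := HasInjectiveQuotientCompression.hasAperiodicSmoothSubrelation hE hρ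
  have h₂₃ := HasAperiodicSmoothSubrelation.hasSmoothIncreasingDecomposition hE hρ
  have h₃₁ := HasSmoothIncreasingDecomposition.hasInjectiveQuotientCompression hE hρ
  exact ⟨⟨h₁₂, h₃₁ ∘ h₂₃⟩, ⟨h₂₃, h₁₂ ∘ h₃₁⟩⟩

end CocycleNadkarni
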